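/- Let μ ∈ (0,∞) be fixed and let F_T, F_A, F_Λ, F_B be probability distributions on [0,∞) (the distributions of nonnegative random variables T, A, Λ, B, with A and Λ independent, i.e. the pair (A,Λ) has distribution F_A ⊗ F_Λ). Then the conditions 0 ≤ E[T] < 1, E[A]·E[Λ] = 1, E[A²] < ∞, E[Λ²] < ∞ and 0 ≤ E[B] < ∞ hold if and only if the functional equation F̂(s) = ∫₀^∞ ∫₀^∞ (1 + λ·σ_B(σ(s)))^{−a} dF_A(a) dF_Λ(λ) for all s ≥ 0 has exactly one solution: a probability distribution F on [0,∞) with mean μ and finite second moment (here σ is built from the unknown F, F_T and μ, and σ_B from F_B). Moreover, the unique solution F satisfies Var[F] = ((Var[AΛ] + E[A]·E[Λ²] + E[B] + E[T])/(1 − E[T]))·μ², where Var[AΛ] = E[A²]·E[Λ²] − (E[A]·E[Λ])². -/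

import Mathlib

/-!
Write `φ(u) = E[(1 + Λ u)^{-A}]`, so that a solution is a distribution `F` of mean `μ` with
`F̂ = φ ∘ σ_B ∘ σ`.

**Moment conditions imply existence and uniqueness.** Given the moment conditions, the right-hand
side `F ↦ φ ∘ σ_B ∘ σ` is a contraction: `φ` and `σ_B` are `1`-Lipschitz (`phi_lipschitz`,
`sigmaB_lipschitz`), and `F ↦ σ` shrinks the distance `sup |F̂(s) - Ĝ(s)| / s²` by the factor
`E[T] < 1` (`sigma_contract`). This distance is finite between distributions of equal mean and
finite second moment, which gives uniqueness (`Sol.unique`). For existence (`exists_sol`) the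
iterates and their limit must be Laplace transforms of distributions satisfying
`1 - μ s ≤ F̂(s) ≤ 1 - μ s + C s²`, a condition equivalent to mean `μ` and second moment at most
`2 C` and preserved by the right-hand side once `C` is large (`Good.step`).

Laplace transforms are recognised without complete monotonicity: `ExpPos f` says that
`∑ c_s f(s) ≥ 0` whenever `∑ c_s e^{-s x} ≥ 0` on `[0,∞)`. With the Riesz extension and
Riesz–Markov–Kakutani theorems on `[0,1] = e^{-[0,∞]}` such an `f`, if `f 0 = 1` and
`1 - m s ≤ f s`, is the transform of a distribution (`ExpPos.exists_LS`). The class is visibly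
closed under products, mixtures and pointwise limits, hence under the subordinations that make up
`φ ∘ σ_B ∘ σ` (`Bern.sigma`, `expPos_phi`); note that `σ_B` is itself an instance of `σ`, with the
unit mass at `1` in the role of `F` (`sigmaB_eq`).

**A solution forces the moment conditions and the variance.** Expanding `F̂ = φ(σ_B(σ))` along
`s = 1/(n+1) → 0` to first order gives `E[A] E[Λ] = 1` (`Sol.first_order`), and to second order
`m₂ = ((E[A²] + E[A]) E[Λ²] + E[B]) μ² + E[T] m₂`, `m₂` the second moment of `F`
(`Sol.second_order`). Both identities are proved in `[0,∞]`, where the moments may be infinite: the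
rescaled integrands are dominated by their own limits, so Fatou's lemma suffices
(`tendsto_lintegral_of_le_limit`). Finiteness of `m₂` then yields the conditions
(`Sol.cond`), and solving for `m₂` the variance (`Sol.variance`).
-/

open MeasureTheory

/-- Laplace–Stieltjes transform of a (nonnegative) probability distribution. -/
noncomputable def LS (F : Measure ℝ) (s : ℝ) : ℝ := ∫ x, Real.exp (-(s * x)) ∂F

/-- `σ(s) = ∫₀^∞ (1 − F̂(ts))/t dF_T(t)`, with the integrand at `t = 0` equal to `μ s`. -/
noncomputable def sigmaT (F FT : Measure ℝ) (μ : ℝ) (s : ℝ) : ℝ :=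
  ∫ t, (if t = 0 then μ * s else (1 - LS F (t * s)) / t) ∂FT

/-- The Bernstein function `σ_B(s) = ∫₀^s F̂_B(t) dt`. -/
noncomputable def sigmaB (FB : Measure ℝ) (s : ℝ) : ℝ := ∫ t in (0:ℝ)..s, LS FB t

/-- The moment conditions: `E[T] < 1`, `E[A]·E[Λ] = 1`, `E[A²] < ∞`, `E[Λ²] < ∞`,
`E[B] < ∞` (with `A` and `Λ` independent, `E[AΛ] = E[A]·E[Λ]`). -/
def Cond (FT FA FL FB : Measure ℝ) : Prop :=
  (∫⁻ t, ENNReal.ofReal t ∂FT) < 1 ∧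
  (∫⁻ a, ENNReal.ofReal a ∂FA) * (∫⁻ l, ENNReal.ofReal l ∂FL) = 1 ∧
  (∫⁻ a, ENNReal.ofReal (a ^ 2) ∂FA) < ⊤ ∧ (∫⁻ l, ENNReal.ofReal (l ^ 2) ∂FL) < ⊤ ∧
  (∫⁻ b, ENNReal.ofReal b ∂FB) < ⊤

/-- `F` is a solution: a probability distribution on `[0,∞)` with mean `μ`, finite second
moment, satisfying `F̂(s) = ∫₀^∞ ∫₀^∞ (1 + λ σ_B(σ(s)))^{−a} dF_A(a) dF_Λ(λ)`
for all `s ≥ 0`. -/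
def Sol (FT FA FL FB : Measure ℝ) (μ : ℝ) (F : Measure ℝ) : Prop :=
  IsProbabilityMeasure F ∧ F (Set.Iio 0) = 0 ∧ (∫ x, x ∂F) = μ ∧
  Integrable (fun x => x ^ 2) F ∧
  ∀ s : ℝ, 0 ≤ s →
    LS F s = ∫ l, ∫ a, (1 + l * sigmaB FB (sigmaT F FT μ s)) ^ (-a) ∂FA ∂FL


open Filter Topology
open scoped NNReal ENNReal

/-! ### Positive functionals on exponential sums -/

/-- `f` is positive on exponential sums: every finite combination `∑ c_s e^{-s x}` (with `s ≥ 0`)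
that is nonnegative on `[0,∞)` has `∑ c_s f(s) ≥ 0`. Together with `f 0 = 1` and continuity at `0`
this characterises Laplace transforms of probability distributions on `[0,∞)`. Only the values of
`f` on `[0,∞)` matter. -/
def ExpPos (f : ℝ → ℝ) : Prop :=
  ∀ (S : Finset ℝ≥0) (c : ℝ≥0 → ℝ),
    (∀ x : ℝ, 0 ≤ x → 0 ≤ ∑ s ∈ S, c s * Real.exp (-((s : ℝ) * x))) → 0 ≤ ∑ s ∈ S, c s * f s

lemma ExpPos.congr {f g : ℝ → ℝ} (hf : ExpPos f) (h : ∀ s, 0 ≤ s → f s = g s) : ExpPos g := by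
  intro S c hc
  have := hf S c hc
  rwa [Finset.sum_congr rfl fun s _ => by rw [h s s.2]] at this

lemma expPos_exp {x : ℝ} (hx : 0 ≤ x) : ExpPos (fun s => Real.exp (-(s * x))) :=
  fun _ _ hc => hc x hx

lemma expPos_one : ExpPos (fun _ => 1) := by
  simpa using expPos_exp (le_refl (0 : ℝ))

lemma ExpPos.add {f g : ℝ → ℝ} (hf : ExpPos f) (hg : ExpPos g) : ExpPos (fun s => f s + g s) := by
  intro S c hc
  have := add_nonneg (hf S c hc) (hg S c hc)
  simpa [mul_add, Finset.sum_add_distrib] using this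

lemma ExpPos.const_mul {f : ℝ → ℝ} (hf : ExpPos f) {k : ℝ} (hk : 0 ≤ k) :
    ExpPos (fun s => k * f s) := by
  intro S c hc
  have := mul_nonneg hk (hf S c hc)
  rw [Finset.mul_sum] at this
  exact this.trans_eq (Finset.sum_congr rfl fun s _ => by ring)

/-- Products correspond to convolution: test against `e^{-s(x+y)}`, first in `y`, then in `x`. -/
lemma ExpPos.mul {f g : ℝ → ℝ} (hf : ExpPos f) (hg : ExpPos g) : ExpPos (fun s => f s * g s) := by
  intro S c hc
  have := hf S (fun s => c s * g s) fun x hx => by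
    have := hg S (fun s => c s * Real.exp (-((s : ℝ) * x))) fun y hy => by
      have := hc (x + y) (by positivity)
      convert this using 2
      rw [mul_assoc, ← Real.exp_add]
      ring_nf
    convert this using 2
    ring
  convert this using 2
  ring

lemma ExpPos.lim {f : ℕ → ℝ → ℝ} {g : ℝ → ℝ} (hf : ∀ n, ExpPos (f n))
    (h : ∀ s, 0 ≤ s → Tendsto (fun n => f n s) atTop (𝓝 (g s))) : ExpPos g := by
  intro S c hc
  refine ge_of_tendsto' (x := atTop) (f := fun n => ∑ s ∈ S, c s * f n s) ?_ fun n => hf n S c hc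
  exact tendsto_finsetSum _ fun s _ => (h s s.2).const_mul _

lemma ExpPos.integral {Ω : Type*} [MeasurableSpace Ω] {ν : Measure Ω} {h : Ω → ℝ → ℝ}
    (hh : ∀ᵐ ω ∂ν, ExpPos (h ω)) (hi : ∀ s, 0 ≤ s → Integrable (fun ω => h ω s) ν) :
    ExpPos (fun s => ∫ ω, h ω s ∂ν) := by
  intro S c hc
  have : ∑ s ∈ S, c s * ∫ ω, h ω s ∂ν = ∫ ω, ∑ s ∈ S, c s * h ω s ∂ν := by
    rw [integral_finsetSum _ fun (s : ℝ≥0) _ => (hi s s.2).const_mul _]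
    simp [integral_const_mul]
  rw [this]
  exact integral_nonneg_of_ae (hh.mono fun ω hω => hω S c hc)

lemma ExpPos.pow {f : ℝ → ℝ} (hf : ExpPos f) (n : ℕ) : ExpPos (fun s => f s ^ n) := by
  induction n with
  | zero => simpa using expPos_one
  | succ n ih => simpa [pow_succ] using ih.mul hf

lemma ExpPos.sum {f : ℕ → ℝ → ℝ} (hf : ∀ n, ExpPos (f n)) (N : ℕ) :
    ExpPos (fun s => ∑ n ∈ Finset.range N, f n s) := by
  induction N with
  | zero => intro S c _; simp
  | succ n ih => simpa [Finset.sum_range_succ] using ih.add (hf n)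

lemma ExpPos.exp {f : ℝ → ℝ} (hf : ExpPos f) : ExpPos (fun s => Real.exp (f s)) := by
  refine ExpPos.lim (f := fun N s => ∑ n ∈ Finset.range N, (1 / (n.factorial : ℝ)) * f s ^ n)
    (fun N => ExpPos.sum (fun n => (hf.pow n).const_mul (by positivity)) N) fun s _ => ?_
  have := (NormedSpace.expSeries_div_hasSum_exp (f s)).tendsto_sum_nat
  rw [← Real.exp_eq_exp_ℝ] at this
  simpa [div_eq_inv_mul] using this

/-- The monomials `y ↦ y^s`, `s ≥ 0`, on the unit interval; under `y = e^{-x}` they are the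
exponentials `e^{-s x}`. -/
noncomputable def monoC (s : ℝ≥0) : C(unitInterval, ℝ) :=
  ⟨fun y => (y : ℝ) ^ (s : ℝ), (Real.continuous_rpow_const s.2).comp continuous_subtype_val⟩

lemma monoC_apply (s : ℝ≥0) (y : unitInterval) : monoC s y = (y : ℝ) ^ (s : ℝ) := rfl

/-- An abstract moment theorem on `[0,1]`: by the Riesz extension theorem the functional
`y^s ↦ f(s)` extends to a positive functional on `C([0,1])`, which is integration against a
measure by the Riesz–Markov–Kakutani theorem. -/
lemma ExpPos.exists_measure {f : ℝ → ℝ} (hf : ExpPos f) :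
    ∃ P : Measure unitInterval, IsFiniteMeasure P ∧
      ∀ s : ℝ≥0, ∫ y, (y : ℝ) ^ (s : ℝ) ∂P = f s := by
  classical
  let T : (ℝ≥0 →₀ ℝ) →ₗ[ℝ] C(unitInterval, ℝ) := Finsupp.linearCombination ℝ monoC
  let ℓ : (ℝ≥0 →₀ ℝ) →ₗ[ℝ] ℝ := Finsupp.linearCombination ℝ (fun s : ℝ≥0 => f s)
  have hpos : ∀ c, 0 ≤ T c → 0 ≤ ℓ c := by
    intro c hc
    have := hf c.support c fun x hx => by
      have h1 : 0 ≤ T c ⟨Real.exp (-x), (Real.exp_pos _).le, Real.exp_le_one_iff.2 (by linarith)⟩ :=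
        hc _
      simp only [T, Finsupp.linearCombination_apply, Finsupp.sum, ContinuousMap.coe_sum,
        Finset.sum_apply, ContinuousMap.smul_apply, smul_eq_mul, monoC_apply] at h1
      convert h1 using 3
      rw [← Real.exp_mul]
      ring_nf
    simpa [ℓ, Finsupp.linearCombination_apply, Finsupp.sum] using this
  have hker : LinearMap.ker T ≤ LinearMap.ker ℓ := by
    intro c hc
    rw [LinearMap.mem_ker] at hc ⊢
    refine le_antisymm ?_ (hpos c hc.ge)
    have := hpos (-c) (by rw [map_neg, hc, neg_zero])
    rw [map_neg] at this
    linarith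
  let g : T.range →ₗ[ℝ] ℝ :=
    ((LinearMap.ker T).liftQ ℓ hker).comp T.quotKerEquivRange.symm.toLinearMap
  have hg : ∀ c, g ⟨T c, LinearMap.mem_range_self T c⟩ = ℓ c := by
    intro c
    have : T.quotKerEquivRange.symm ⟨T c, LinearMap.mem_range_self T c⟩ =
        (LinearMap.ker T).mkQ c := LinearMap.quotKerEquivRange_symm_apply_image T c _
    simp [g, this]
  obtain ⟨G, hG, hGpos⟩ := riesz_extension (PointedCone.positive ℝ C(unitInterval, ℝ))
    ⟨T.range, g⟩ (by
      rintro ⟨_, c, rfl⟩ hx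
      have : 0 ≤ g ⟨T c, LinearMap.mem_range_self T c⟩ := by
        rw [hg]; exact hpos c (by simpa using hx)
      exact this) (by
      intro y
      refine ⟨⟨T (Finsupp.single 0 ‖y‖), LinearMap.mem_range_self T _⟩, ?_⟩
      have : 0 ≤ T (Finsupp.single 0 ‖y‖) + y := by
        intro z
        have := (abs_le.1 (Real.norm_eq_abs _ ▸ y.norm_coe_le_norm z)).1
        simp [T, monoC_apply]
        linarith
      simpa using this)
  let Λ : CompactlySupportedContinuousMap unitInterval ℝ →ₚ[ℝ] ℝ :=
    PositiveLinearMap.mk₀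
      { toFun := fun h => G (CompactlySupportedContinuousMap.continuousMapEquiv.symm h)
        map_add' := fun a b => by rw [← map_add]; rfl
        map_smul' := fun a b => by rw [RingHom.id_apply, ← map_smul]; rfl } (by
      intro h hh
      refine hGpos _ ?_
      have : 0 ≤ CompactlySupportedContinuousMap.continuousMapEquiv.symm h := fun z => hh z
      simpa using this)
  refine ⟨RealRMK.rieszMeasure Λ, inferInstance, fun s => ?_⟩
  have h1 := RealRMK.integral_rieszMeasure Λ
    (CompactlySupportedContinuousMap.continuousMapEquiv (monoC s))
  have h2 : Λ (CompactlySupportedContinuousMap.continuousMapEquiv (monoC s)) = G (monoC s) := rfl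
  have h3 := hG ⟨T (Finsupp.single s 1), LinearMap.mem_range_self T _⟩
  have h4 : G (T (Finsupp.single s 1)) = ℓ (Finsupp.single s 1) := h3.trans (hg _)
  rw [h2] at h1
  simp only [T, ℓ, Finsupp.linearCombination_single, one_smul] at h4
  rw [← h4, ← h1]
  rfl


/-! ### Elementary estimates and one-sided limits of integrals -/

/-- The second-order Taylor quotient `(e^{-x} - 1 + x) / x²`, extended by its limit `1/2`. -/
noncomputable def expQ (x : ℝ) : ℝ := if x = 0 then 1 / 2 else (Real.exp (-x) - 1 + x) / x ^ 2

lemma exp_neg_eq (x : ℝ) : Real.exp (-x) = 1 - x + x ^ 2 * expQ x := by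
  unfold expQ
  split_ifs with h
  · simp [h]
  · field_simp
    ring

lemma expQ_nonneg (x : ℝ) : 0 ≤ expQ x := by
  unfold expQ
  split_ifs with h
  · norm_num
  · have := Real.add_one_le_exp (-x)
    exact div_nonneg (by linarith) (sq_nonneg x)

lemma exp_neg_le_quadratic {x : ℝ} (hx : 0 ≤ x) : Real.exp (-x) ≤ 1 - x + x ^ 2 / 2 := by
  have h := Real.quadratic_le_exp_of_nonneg hx
  rw [Real.exp_neg]
  refine inv_le_of_inv_le₀ (by nlinarith [sq_nonneg (x - 1)]) (le_trans ?_ h)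
  rw [inv_le_iff_one_le_mul₀ (by nlinarith [sq_nonneg (x - 1)])]
  nlinarith [sq_nonneg (x ^ 2)]

lemma expQ_le {x : ℝ} (hx : 0 ≤ x) : expQ x ≤ 1 / 2 := by
  unfold expQ
  split_ifs with h
  · exact le_rfl
  · have := exp_neg_le_quadratic hx
    rw [div_le_iff₀ (by positivity)]
    linarith

lemma mul_expQ_nonneg {x : ℝ} (hx : 0 ≤ x) : 0 ≤ x * expQ x := mul_nonneg hx (expQ_nonneg x)

lemma mul_expQ_le_one {x : ℝ} (hx : 0 ≤ x) : x * expQ x ≤ 1 := by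
  rcases hx.eq_or_lt with rfl | hx
  · simp
  · have h1 := exp_neg_eq x
    have h2 : Real.exp (-x) ≤ 1 := Real.exp_le_one_iff.2 (by linarith)
    have h3 : x * (x * expQ x) ≤ x * 1 := by nlinarith
    exact le_of_mul_le_mul_left h3 hx

lemma measurable_expQ : Measurable expQ :=
  Measurable.ite (measurableSet_singleton 0) measurable_const (by fun_prop)

lemma tendsto_expQ : Tendsto expQ (𝓝 0) (𝓝 (1 / 2)) := by
  rw [tendsto_iff_norm_sub_tendsto_zero]
  refine squeeze_zero' (g := fun x => |x|) (Eventually.of_forall fun _ => norm_nonneg _) ?_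
    (by simpa using (continuous_abs (G := ℝ)).tendsto 0)
  filter_upwards [Metric.ball_mem_nhds (0 : ℝ) one_pos] with x hx
  rw [Metric.mem_ball, dist_zero_right, Real.norm_eq_abs] at hx
  rw [Real.norm_eq_abs]
  by_cases h : x = 0
  · simp [expQ, h]
  have h1 := Real.exp_bound (x := -x) (by simpa using hx.le) (n := 3) (by norm_num)
  simp only [Finset.sum_range_succ, Finset.sum_range_zero, Nat.factorial] at h1
  have hx2 : 0 < x ^ 2 := by positivity
  have h2 : Real.exp (-x) - (1 - x + x ^ 2 / 2) = x ^ 2 * (expQ x - 1 / 2) := by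
    rw [exp_neg_eq]; ring
  norm_num at h1
  rw [show (1 : ℝ) + -x + x ^ 2 / 2 = 1 - x + x ^ 2 / 2 by ring, h2, abs_mul,
    abs_of_pos hx2] at h1
  have h3 : |x| ^ 3 = x ^ 2 * |x| := by rw [pow_succ, sq_abs]
  rw [h3] at h1
  have h4 : x ^ 2 * |expQ x - 1 / 2| ≤ x ^ 2 * |x| := by
    have : 0 ≤ x ^ 2 * |x| := by positivity
    linarith
  exact le_of_mul_le_mul_left h4 hx2

/-- A sequence of functions dominated by its own limit: no integrability is needed, the limit may
have infinite integral. -/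
lemma tendsto_lintegral_of_le_limit {Ω : Type*} [MeasurableSpace Ω] {ν : Measure Ω}
    {h : ℕ → Ω → ℝ≥0∞} {H : Ω → ℝ≥0∞} (hm : ∀ n, Measurable (h n))
    (hle : ∀ n, ∀ᵐ ω ∂ν, h n ω ≤ H ω)
    (ht : ∀ᵐ ω ∂ν, Tendsto (fun n => h n ω) atTop (𝓝 (H ω))) :
    Tendsto (fun n => ∫⁻ ω, h n ω ∂ν) atTop (𝓝 (∫⁻ ω, H ω ∂ν)) := by
  refine tendsto_of_le_liminf_of_limsup_le ?_ ?_
  · calc ∫⁻ ω, H ω ∂ν = ∫⁻ ω, liminf (fun n => h n ω) atTop ∂ν :=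
          lintegral_congr_ae (ht.mono fun ω hω => hω.liminf_eq.symm)
      _ ≤ _ := lintegral_liminf_le hm
  · exact limsup_le_of_le (h := Eventually.of_forall fun n => lintegral_mono_ae (hle n))

lemma ae_nonneg_of_Iio {F : Measure ℝ} (hF : F (Set.Iio 0) = 0) : ∀ᵐ x ∂F, 0 ≤ x := by
  rw [ae_iff]
  convert hF using 2
  ext x
  simp

lemma tendsto_double {ν ρ : Measure ℝ} [SFinite ρ] (hν : ν (Set.Iio 0) = 0)
    (hρ : ρ (Set.Iio 0) = 0) {h : ℕ → ℝ → ℝ → ℝ} {H : ℝ → ℝ → ℝ}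
    (hm : ∀ n, Measurable (Function.uncurry (h n)))
    (hle : ∀ n x y, 0 ≤ x → 0 ≤ y → h n x y ≤ H x y)
    (ht : ∀ x y, 0 ≤ x → 0 ≤ y → Tendsto (fun n => h n x y) atTop (𝓝 (H x y))) :
    Tendsto (fun n => ∫⁻ x, ∫⁻ y, ENNReal.ofReal (h n x y) ∂ρ ∂ν) atTop
      (𝓝 (∫⁻ x, ∫⁻ y, ENNReal.ofReal (H x y) ∂ρ ∂ν)) := by
  refine tendsto_lintegral_of_le_limit (fun n => ?_) (fun n => ?_) ?_
  · exact Measurable.lintegral_prod_right' (f := fun p => ENNReal.ofReal (Function.uncurry (h n) p))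
      (hm n).ennreal_ofReal
  · filter_upwards [ae_nonneg_of_Iio hν] with x hx
    refine lintegral_mono_ae ?_
    filter_upwards [ae_nonneg_of_Iio hρ] with y hy
    exact ENNReal.ofReal_le_ofReal (hle n x y hx hy)
  · filter_upwards [ae_nonneg_of_Iio hν] with x hx
    refine tendsto_lintegral_of_le_limit (fun n => ?_) (fun n => ?_) ?_
    · exact ((hm n).of_uncurry_left).ennreal_ofReal
    · filter_upwards [ae_nonneg_of_Iio hρ] with y hy
      exact ENNReal.ofReal_le_ofReal (hle n x y hx hy)
    · filter_upwards [ae_nonneg_of_Iio hρ] with y hy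
      exact ENNReal.tendsto_ofReal (ht x y hx hy)

/-- Iterated integrals of functions dominated on the positive quadrant, in both the real and the
extended nonnegative sense. -/
lemma double_integral {ν ρ : Measure ℝ} [IsFiniteMeasure ν] [IsFiniteMeasure ρ]
    (hν : ν (Set.Iio 0) = 0) (hρ : ρ (Set.Iio 0) = 0) {g H : ℝ → ℝ → ℝ}
    (hg : Measurable (Function.uncurry g)) (hH : Integrable (Function.uncurry H) (ν.prod ρ))
    (h0 : ∀ x y, 0 ≤ x → 0 ≤ y → 0 ≤ g x y) (hle : ∀ x y, 0 ≤ x → 0 ≤ y → g x y ≤ H x y) :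
    Integrable (Function.uncurry g) (ν.prod ρ) ∧
      ENNReal.ofReal (∫ x, ∫ y, g x y ∂ρ ∂ν) = ∫⁻ x, ∫⁻ y, ENNReal.ofReal (g x y) ∂ρ ∂ν := by
  have hQ : ∀ᵐ p ∂(ν.prod ρ), 0 ≤ p.1 ∧ 0 ≤ p.2 :=
    (Measure.quasiMeasurePreserving_fst.ae (ae_nonneg_of_Iio hν)).and
      (Measure.quasiMeasurePreserving_snd.ae (ae_nonneg_of_Iio hρ))
  have hi : Integrable (Function.uncurry g) (ν.prod ρ) := by
    refine hH.mono' hg.aestronglyMeasurable (hQ.mono fun p hp => ?_)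
    change |g p.1 p.2| ≤ H p.1 p.2
    rw [abs_of_nonneg (h0 _ _ hp.1 hp.2)]
    exact hle _ _ hp.1 hp.2
  refine ⟨hi, ?_⟩
  have h1 := integral_prod _ hi
  simp only [Function.uncurry_apply_pair] at h1
  rw [← h1, ofReal_integral_eq_lintegral_ofReal hi (hQ.mono fun p hp => h0 _ _ hp.1 hp.2),
    lintegral_prod _ hg.ennreal_ofReal.aemeasurable]
  rfl

/-! ### Laplace transforms -/

lemma measurable_LS (F : Measure ℝ) [SFinite F] : Measurable (LS F) := by
  have : StronglyMeasurable (fun p : ℝ × ℝ => Real.exp (-(p.1 * p.2))) :=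
    (by fun_prop : Continuous fun p : ℝ × ℝ => Real.exp (-(p.1 * p.2))).stronglyMeasurable
  exact this.integral_prod_right.measurable

section LS

variable {F : Measure ℝ} [IsProbabilityMeasure F]

lemma integrable_exp (hF : F (Set.Iio 0) = 0) {s : ℝ} (hs : 0 ≤ s) :
    Integrable (fun x => Real.exp (-(s * x))) F := by
  refine (integrable_const (1 : ℝ)).mono' (by fun_prop) ?_
  filter_upwards [ae_nonneg_of_Iio hF] with x hx
  rw [Real.norm_eq_abs, abs_of_pos (Real.exp_pos _)]
  exact Real.exp_le_one_iff.2 (by nlinarith)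

lemma LS_nonneg (F : Measure ℝ) (s : ℝ) : 0 ≤ LS F s := integral_nonneg fun _ => (Real.exp_pos _).le

lemma LS_le_one (hF : F (Set.Iio 0) = 0) {s : ℝ} (hs : 0 ≤ s) : LS F s ≤ 1 := by
  have : LS F s ≤ ∫ _, (1 : ℝ) ∂F := by
    refine integral_mono_ae (integrable_exp hF hs) (integrable_const _) ?_
    filter_upwards [ae_nonneg_of_Iio hF] with x hx
    exact Real.exp_le_one_iff.2 (by nlinarith)
  simpa using this

lemma LS_zero : LS F 0 = 1 := by simp [LS]

lemma expPos_LS (hF : F (Set.Iio 0) = 0) : ExpPos (LS F) := by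
  refine ExpPos.integral (ν := F) (h := fun x s => Real.exp (-(s * x))) ?_
    fun s hs => integrable_exp hF hs
  filter_upwards [ae_nonneg_of_Iio hF] with x hx using expPos_exp hx

lemma LS_lower (hF : F (Set.Iio 0) = 0) {m : ℝ} (hi : Integrable (fun x => x) F)
    (hm : ∫ x, x ∂F = m) {s : ℝ} (hs : 0 ≤ s) : 1 - m * s ≤ LS F s := by
  have h1 : ∫ x, (1 - s * x) ∂F = 1 - m * s := by
    rw [integral_sub (integrable_const _) (hi.const_mul s), integral_const_mul, hm]
    simp [mul_comm]
  rw [← h1]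
  refine integral_mono ((integrable_const _).sub (hi.const_mul s)) (integrable_exp hF hs) ?_
  intro x
  have := Real.add_one_le_exp (-(s * x))
  simp only
  linarith

lemma one_sub_LS_eq (hF : F (Set.Iio 0) = 0) {s : ℝ} (hs : 0 ≤ s) :
    1 - LS F s = ∫ x, s * x * (1 - s * x * expQ (s * x)) ∂F := by
  have : 1 - LS F s = (∫ _, (1 : ℝ) ∂F) - LS F s := by simp
  rw [this, LS, ← integral_sub (integrable_const _) (integrable_exp hF hs)]
  refine integral_congr_ae (Eventually.of_forall fun x => ?_)
  simp only [exp_neg_eq]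
  ring

/-- The test sequence `1/(n+1)` tending to `0` through positive values. -/
noncomputable def sq0 (n : ℕ) : ℝ := 1 / ((n : ℝ) + 1)

lemma sq0_pos (n : ℕ) : 0 < sq0 n := by unfold sq0; positivity

lemma tendsto_sq0 : Tendsto sq0 atTop (𝓝 0) := tendsto_one_div_add_atTop_nhds_zero_nat

/-- The first two moments can be read off the Laplace transform near `0`. -/
lemma moments_of_LS (hF : F (Set.Iio 0) = 0) {m C : ℝ} (hm : 0 ≤ m) (hC : 0 ≤ C)
    (hlo : ∀ s, 0 ≤ s → 1 - m * s ≤ LS F s)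
    (hup : ∀ s, 0 ≤ s → LS F s ≤ 1 - m * s + C * s ^ 2) :
    Integrable (fun x => x) F ∧ ∫ x, x ∂F = m ∧ Integrable (fun x => x ^ 2) F ∧
      ∫ x, x ^ 2 ∂F ≤ 2 * C := by
  have hae := ae_nonneg_of_Iio hF
  have hq := measurable_expQ
  have hmq : ∀ s : ℝ, Measurable fun x => expQ (s * x) := fun s => hq.comp (by fun_prop)
  have htq : ∀ x : ℝ, Tendsto (fun n => expQ (sq0 n * x)) atTop (𝓝 (1 / 2)) := fun x =>
    tendsto_expQ.comp (by simpa using tendsto_sq0.mul_const x)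
  have h1 : ∫⁻ x, ENNReal.ofReal x ∂F = ENNReal.ofReal m := by
    refine tendsto_nhds_unique (f := fun n => ENNReal.ofReal ((1 - LS F (sq0 n)) / sq0 n))
      (l := atTop) ?_ ?_
    · have : ∀ n, ENNReal.ofReal ((1 - LS F (sq0 n)) / sq0 n) =
          ∫⁻ x, ENNReal.ofReal (x * (1 - sq0 n * x * expQ (sq0 n * x))) ∂F := by
        intro n
        have hn := sq0_pos n
        rw [one_sub_LS_eq hF hn.le, ← integral_div, ofReal_integral_eq_lintegral_ofReal]
        · refine lintegral_congr fun x => ?_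
          congr 1
          field_simp
        · refine Integrable.div_const ((integrable_congr ?_).1
            ((integrable_const (1 : ℝ)).sub (integrable_exp hF hn.le))) _
          refine Eventually.of_forall fun x => ?_
          simp only [exp_neg_eq, Pi.sub_apply]
          ring
        · filter_upwards [hae] with x hx
          have := mul_expQ_le_one (mul_nonneg hn.le hx)
          exact div_nonneg (mul_nonneg (by positivity) (by linarith)) hn.le
      simp_rw [this]
      refine tendsto_lintegral_of_le_limit (fun n => ?_) (fun n => ?_) ?_
      · have := hmq (sq0 n)
        exact Measurable.ennreal_ofReal (by fun_prop)
      · filter_upwards [hae] with x hx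
        refine ENNReal.ofReal_le_ofReal ?_
        have := mul_expQ_nonneg (mul_nonneg (sq0_pos n).le hx)
        nlinarith
      · filter_upwards [hae] with x hx
        refine ENNReal.tendsto_ofReal ?_
        have := (((tendsto_sq0.mul_const x).mul (htq x)).const_sub 1).const_mul x
        simpa using this
    · refine ENNReal.tendsto_ofReal ?_
      refine tendsto_of_tendsto_of_tendsto_of_le_of_le (g := fun n => m - C * sq0 n)
        (h := fun _ => m) ?_ tendsto_const_nhds ?_ ?_
      · simpa using (tendsto_sq0.const_mul C).const_sub m
      · intro n
        have hn := sq0_pos n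
        have := hup _ hn.le
        simp only
        rw [le_div_iff₀ hn]
        nlinarith
      · intro n
        have hn := sq0_pos n
        have := hlo _ hn.le
        simp only
        rw [div_le_iff₀ hn]
        linarith
  have hi : Integrable (fun x => x) F := by
    rw [← lintegral_ofReal_ne_top_iff_integrable (by fun_prop) hae, h1]
    exact ENNReal.ofReal_ne_top
  have hmean : ∫ x, x ∂F = m := by
    rw [integral_eq_lintegral_of_nonneg_ae hae (by fun_prop), h1, ENNReal.toReal_ofReal hm]
  have h2 : ∫⁻ x, ENNReal.ofReal (x ^ 2 * (1 / 2)) ∂F ≤ ENNReal.ofReal C := by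
    refine le_of_tendsto' (x := atTop)
      (f := fun n => ∫⁻ x, ENNReal.ofReal (x ^ 2 * expQ (sq0 n * x)) ∂F) ?_ fun n => ?_
    · refine tendsto_lintegral_of_le_limit (fun n => ?_) (fun n => ?_) ?_
      · have := hmq (sq0 n)
        exact Measurable.ennreal_ofReal (by fun_prop)
      · filter_upwards [hae] with x hx
        refine ENNReal.ofReal_le_ofReal ?_
        have := expQ_le (mul_nonneg (sq0_pos n).le hx)
        gcongr
      · exact Eventually.of_forall fun x => ENNReal.tendsto_ofReal ((htq x).const_mul _)
    · have hn := sq0_pos n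
      have hI : Integrable (fun x => Real.exp (-(sq0 n * x)) - 1 + sq0 n * x) F :=
        ((integrable_exp hF hn.le).sub (integrable_const _)).add (hi.const_mul _)
      have e1 : ∫ x, x ^ 2 * expQ (sq0 n * x) ∂F = (LS F (sq0 n) - 1 + m * sq0 n) / sq0 n ^ 2 := by
        have : ∀ x, x ^ 2 * expQ (sq0 n * x) =
            (Real.exp (-(sq0 n * x)) - 1 + sq0 n * x) / sq0 n ^ 2 := by
          intro x
          rw [exp_neg_eq]
          field_simp
          ring
        simp_rw [this]
        have hA : Integrable (fun x => Real.exp (-(sq0 n * x)) - 1) F :=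
          (integrable_exp hF hn.le).sub (integrable_const _)
        rw [integral_div, integral_add hA (hi.const_mul _),
          integral_sub (integrable_exp hF hn.le) (integrable_const _),
          integral_const_mul, hmean]
        simp [LS, mul_comm]
      have e2 : Integrable (fun x => x ^ 2 * expQ (sq0 n * x)) F := by
        refine (integrable_congr (Eventually.of_forall fun x => ?_)).1 (hI.div_const (sq0 n ^ 2))
        simp only [exp_neg_eq]
        field_simp
        ring
      rw [← ofReal_integral_eq_lintegral_ofReal e2
        (Eventually.of_forall fun x => mul_nonneg (sq_nonneg x) (expQ_nonneg _)), e1]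
      refine ENNReal.ofReal_le_ofReal ?_
      rw [div_le_iff₀ (by positivity)]
      have := hup _ hn.le
      linarith
  have hi2 : Integrable (fun x : ℝ => x ^ 2 * (1 / 2)) F := by
    rw [← lintegral_ofReal_ne_top_iff_integrable (by fun_prop)
      (Eventually.of_forall fun x => by simp only [Pi.zero_apply]; positivity)]
    exact (h2.trans_lt ENNReal.ofReal_lt_top).ne
  refine ⟨hi, hmean, ?_, ?_⟩
  · simpa using hi2.mul_const 2
  · rw [← ofReal_integral_eq_lintegral_ofReal hi2
      (Eventually.of_forall fun x => by simp only [Pi.zero_apply]; positivity),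
      ENNReal.ofReal_le_ofReal_iff hC, integral_mul_const] at h2
    linarith

end LS


/-! ### Existence and uniqueness of the measure behind a Laplace transform -/

/-- Continuity at `0`, here in the form `1 - m s ≤ f s`, keeps the measure on `[0,1]` representing
`f` from charging `0`, which corresponds to the point at infinity of `[0,∞]`. -/
lemma ExpPos.exists_LS {f : ℝ → ℝ} (hf : ExpPos f) {m : ℝ} (h0 : f 0 = 1)
    (hlo : ∀ s, 0 ≤ s → 1 - m * s ≤ f s) :
    ∃ F : Measure ℝ, IsProbabilityMeasure F ∧ F (Set.Iio 0) = 0 ∧ ∀ s, 0 ≤ s → LS F s = f s := by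
  obtain ⟨P, hPf, hP⟩ := hf.exists_measure
  have hP1 : P.real Set.univ = 1 := by
    have := hP 0
    simpa [h0] using this
  have hPp : IsProbabilityMeasure P := by
    refine ⟨?_⟩
    rw [measureReal_def, ENNReal.toReal_eq_one_iff] at hP1
    exact hP1
  have hle : ∀ n, 1 - m * sq0 n ≤ P.real {0}ᶜ := by
    intro n
    have hn := sq0_pos n
    refine (hlo _ hn.le).trans ?_
    have h1 : ∫ y : unitInterval, (y : ℝ) ^ sq0 n ∂P = f (sq0 n) := hP ⟨sq0 n, hn.le⟩
    rw [← h1]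
    have h2 : P.real {0}ᶜ = ∫ y, ({0}ᶜ : Set unitInterval).indicator (fun _ => (1 : ℝ)) y ∂P := by
      rw [integral_indicator_const _ (measurableSet_singleton _).compl]
      simp
    rw [h2]
    refine integral_mono_of_nonneg (Eventually.of_forall fun y => Real.rpow_nonneg y.2.1 _)
      ((integrable_const _).indicator (measurableSet_singleton _).compl)
      (Eventually.of_forall fun y => ?_)
    by_cases hy : y = 0
    · simp [hy, Real.zero_rpow hn.ne']
    · simp only [Set.mem_compl_iff, Set.mem_singleton_iff, hy, not_false_eq_true,
        Set.indicator_of_mem]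
      exact Real.rpow_le_one y.2.1 y.2.2 hn.le
  have hc : P.real {0}ᶜ = 1 := by
    refine le_antisymm measureReal_le_one ?_
    refine le_of_tendsto' (x := atTop) (f := fun n => 1 - m * sq0 n) ?_ hle
    simpa using (tendsto_sq0.const_mul m).const_sub 1
  have hne : ∀ᵐ y ∂P, y ≠ 0 := by
    have : P {0}ᶜ = 1 := by rwa [measureReal_def, ENNReal.toReal_eq_one_iff] at hc
    have h2 := (prob_compl_eq_one_iff (measurableSet_singleton _)).1 this
    rw [ae_iff]
    simpa using h2
  have hml : Measurable (fun y : unitInterval => -Real.log y) := by fun_prop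
  refine ⟨P.map (fun y : unitInterval => -Real.log y),
    Measure.isProbabilityMeasure_map hml.aemeasurable, ?_, ?_⟩
  · rw [Measure.map_apply hml measurableSet_Iio]
    convert measure_empty (μ := P)
    ext y
    simpa using Real.log_nonpos y.2.1 y.2.2
  · intro s hs
    have h1 : ∫ y : unitInterval, (y : ℝ) ^ s ∂P = f s := hP ⟨s, hs⟩
    rw [LS, integral_map hml.aemeasurable (by fun_prop), ← h1]
    refine integral_congr_ae (hne.mono fun y hy => ?_)
    have hy0 : 0 < (y : ℝ) := lt_of_le_of_ne y.2.1 fun h => hy (Subtype.ext h.symm)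
    change Real.exp _ = (y : ℝ) ^ s
    rw [Real.rpow_def_of_pos hy0]
    ring_nf

/-- The change of variables `x ↦ e^{-x}` from `[0,∞)` to `[0,1]`. -/
noncomputable def expI (x : ℝ) : unitInterval :=
  ⟨Real.exp (-(max x 0)), (Real.exp_pos _).le, Real.exp_le_one_iff.2 (by simp)⟩

lemma measurable_expI : Measurable expI :=
  Measurable.subtype_mk (by fun_prop)

/-- Uniqueness from the values at integer arguments: under `y = e^{-x}` these are the moments of a
measure on `[0,1]`, which determine it by the Weierstrass theorem. -/
lemma LS_injective {F G : Measure ℝ} [IsProbabilityMeasure F] [IsProbabilityMeasure G]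
    (hF : F (Set.Iio 0) = 0) (hG : G (Set.Iio 0) = 0) (h : ∀ s, 0 ≤ s → LS F s = LS G s) :
    F = G := by
  have hmap : F.map expI = G.map expI := by
    have := Measure.isProbabilityMeasure_map (μ := F) measurable_expI.aemeasurable
    have := Measure.isProbabilityMeasure_map (μ := G) measurable_expI.aemeasurable
    have hint : ∀ (R : Measure ℝ) [IsProbabilityMeasure R] (k : C(unitInterval, ℝ)),
        Integrable k (R.map expI) := by
      intro R _ k
      have := Measure.isProbabilityMeasure_map (μ := R) measurable_expI.aemeasurable
      exact (integrable_const ‖k‖).mono' k.continuous.aestronglyMeasurable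
        (Eventually.of_forall fun y => k.norm_coe_le_norm y)
    have hpow : ∀ (R : Measure ℝ) [IsProbabilityMeasure R], R (Set.Iio 0) = 0 → ∀ n : ℕ,
        ∫ y, (y : ℝ) ^ n ∂(R.map expI) = LS R n := by
      intro R _ hR n
      rw [integral_map measurable_expI.aemeasurable (by fun_prop), LS]
      refine integral_congr_ae ?_
      filter_upwards [ae_nonneg_of_Iio hR] with x hx
      simp only [expI, max_eq_left hx]
      rw [← Real.exp_nat_mul]
      ring_nf
    have hall : ∀ k : C(unitInterval, ℝ), ∫ y, k y ∂(F.map expI) = ∫ y, k y ∂(G.map expI) := by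
      have hcl : ∀ (R : Measure ℝ) [IsProbabilityMeasure R],
          Continuous fun k : C(unitInterval, ℝ) => ∫ y, k y ∂(R.map expI) := by
        intro R _
        have := Measure.isProbabilityMeasure_map (μ := R) measurable_expI.aemeasurable
        refine LipschitzWith.continuous (K := 1) (LipschitzWith.of_dist_le_mul fun a b => ?_)
        rw [dist_eq_norm, ← integral_sub (hint R a) (hint R b), dist_eq_norm]
        refine (norm_integral_le_of_norm_le_const (C := ‖a - b‖)
          (Eventually.of_forall fun y => (a - b).norm_coe_le_norm y)).trans ?_
        simp
      have hclosed : IsClosed {k : C(unitInterval, ℝ) |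
          ∫ y, k y ∂(F.map expI) = ∫ y, k y ∂(G.map expI)} :=
        isClosed_eq (hcl F) (hcl G)
      have hsub : ((polynomialFunctions unitInterval : Subalgebra ℝ C(unitInterval, ℝ)) :
          Set C(unitInterval, ℝ)) ⊆ {k : C(unitInterval, ℝ) |
          ∫ y, k y ∂(F.map expI) = ∫ y, k y ∂(G.map expI)} := by
        rintro k hk
        obtain ⟨p, -, rfl⟩ := hk
        have hev : ∀ (R : Measure ℝ) [IsProbabilityMeasure R], R (Set.Iio 0) = 0 →
            ∫ y : unitInterval, p.eval (y : ℝ) ∂(R.map expI) =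
              ∑ i ∈ Finset.range (p.natDegree + 1), p.coeff i * LS R i := by
          intro R _ hR
          simp_rw [Polynomial.eval_eq_sum_range]
          rw [integral_finsetSum]
          · refine Finset.sum_congr rfl fun i _ => ?_
            rw [integral_const_mul, hpow R hR]
          · intro i _
            exact (hint R ⟨fun y : unitInterval => (y : ℝ) ^ i, by fun_prop⟩).const_mul _
        have h3 : ∫ y : unitInterval, p.eval (y : ℝ) ∂(F.map expI) =
            ∫ y : unitInterval, p.eval (y : ℝ) ∂(G.map expI) := by
          rw [hev F hF, hev G hG]
          exact Finset.sum_congr rfl fun i _ => by rw [h i (Nat.cast_nonneg i)]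
        exact h3
      intro k
      have hk : k ∈ (polynomialFunctions unitInterval).topologicalClosure := by
        rw [polynomialFunctions_closure_eq_top']
        trivial
      exact closure_minimal hsub hclosed hk
    refine ext_of_forall_integral_eq_of_IsFiniteMeasure fun k => ?_
    exact hall k.toContinuousMap
  have hback : ∀ (R : Measure ℝ), R (Set.Iio 0) = 0 →
      (R.map expI).map (fun y : unitInterval => -Real.log y) = R := by
    intro R hR
    rw [Measure.map_map (by fun_prop) measurable_expI]
    have : (fun y : unitInterval => -Real.log y) ∘ expI =ᵐ[R] id := by
      filter_upwards [ae_nonneg_of_Iio hR] with x hx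
      simp [expI, max_eq_left hx]
    rw [Measure.map_congr this, Measure.map_id]
  rw [← hback F hF, ← hback G hG, hmap]


/-! ### The functions `σ` and `σ_B` -/

section Sigma

variable {F FT : Measure ℝ} [IsProbabilityMeasure F] [IsProbabilityMeasure FT] {m : ℝ}

/-- The integrand of `σ`, as a moment integral without a case distinction at `t = 0`. -/
lemma sigma_integrand (hF : F (Set.Iio 0) = 0) (hm : ∫ x, x ∂F = m) {t s : ℝ} (ht : 0 ≤ t)
    (hs : 0 ≤ s) :
    (if t = 0 then m * s else (1 - LS F (t * s)) / t) =
      ∫ x, s * x * (1 - t * s * x * expQ (t * s * x)) ∂F := by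
  split_ifs with h
  · subst h
    simp only [zero_mul, sub_zero, mul_one]
    rw [integral_const_mul, hm, mul_comm]
  · rw [one_sub_LS_eq hF (by positivity), ← integral_div]
    refine integral_congr_ae (Eventually.of_forall fun x => ?_)
    field_simp

lemma sigma_double (hT : FT (Set.Iio 0) = 0) (hF : F (Set.Iio 0) = 0)
    (hi : Integrable (fun x => x) F) {s k : ℝ} (hs : 0 ≤ s) (hk : 0 ≤ k) :
    Integrable (Function.uncurry fun t x : ℝ => k * (s * x * (1 - t * s * x * expQ (t * s * x))))
        (FT.prod F) ∧
      ENNReal.ofReal (∫ t, ∫ x, k * (s * x * (1 - t * s * x * expQ (t * s * x))) ∂F ∂FT) =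
      ∫⁻ t, ∫⁻ x, ENNReal.ofReal (k * (s * x * (1 - t * s * x * expQ (t * s * x)))) ∂F ∂FT := by
  have hq := measurable_expQ
  refine double_integral hT hF (H := fun _ x => k * (s * x)) ?_ ?_ ?_ ?_
  · have : Measurable fun p : ℝ × ℝ => expQ (p.1 * s * p.2) := hq.comp (by fun_prop)
    simp only [Function.uncurry_def]
    fun_prop
  · exact ((hi.const_mul s).const_mul k).comp_snd FT
  · intro t x ht hx
    have := mul_expQ_le_one (x := t * s * x) (by positivity)
    exact mul_nonneg hk (mul_nonneg (by positivity) (by linarith))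
  · intro t x ht hx
    have := mul_expQ_nonneg (x := t * s * x) (by positivity)
    have h2 : 0 ≤ s * x := by positivity
    refine mul_le_mul_of_nonneg_left ?_ hk
    nlinarith

omit [IsProbabilityMeasure FT] in
lemma sigma_eq (hT : FT (Set.Iio 0) = 0) (hF : F (Set.Iio 0) = 0) (hm : ∫ x, x ∂F = m) {s : ℝ}
    (hs : 0 ≤ s) :
    sigmaT F FT m s = ∫ t, ∫ x, s * x * (1 - t * s * x * expQ (t * s * x)) ∂F ∂FT := by
  refine integral_congr_ae ?_
  filter_upwards [ae_nonneg_of_Iio hT] with t ht using sigma_integrand hF hm ht hs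

lemma sigma_integrable (hT : FT (Set.Iio 0) = 0) (hF : F (Set.Iio 0) = 0)
    (hi : Integrable (fun x => x) F) (hm : ∫ x, x ∂F = m) {s : ℝ} (hs : 0 ≤ s) :
    Integrable (fun t => if t = 0 then m * s else (1 - LS F (t * s)) / t) FT := by
  have h := (sigma_double hT hF hi hs zero_le_one).1.integral_prod_left
  refine h.congr ?_
  filter_upwards [ae_nonneg_of_Iio hT] with t ht
  rw [sigma_integrand hF hm ht hs]
  simp

lemma sigma_integrand_nonneg (hF : F (Set.Iio 0) = 0) (hm0 : 0 ≤ m) {t s : ℝ} (ht : 0 ≤ t)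
    (hs : 0 ≤ s) : 0 ≤ (if t = 0 then m * s else (1 - LS F (t * s)) / t) := by
  split_ifs with h
  · positivity
  · have := LS_le_one hF (mul_nonneg ht hs)
    exact div_nonneg (by linarith) ht

omit [IsProbabilityMeasure FT] in
lemma sigma_nonneg (hT : FT (Set.Iio 0) = 0) (hF : F (Set.Iio 0) = 0) (hm0 : 0 ≤ m) {s : ℝ}
    (hs : 0 ≤ s) : 0 ≤ sigmaT F FT m s := by
  refine integral_nonneg_of_ae ?_
  filter_upwards [ae_nonneg_of_Iio hT] with t ht using sigma_integrand_nonneg hF hm0 ht hs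

lemma sigma_le (hT : FT (Set.Iio 0) = 0) (hF : F (Set.Iio 0) = 0)
    (hi : Integrable (fun x => x) F) (hm : ∫ x, x ∂F = m) {s : ℝ}
    (hs : 0 ≤ s) : sigmaT F FT m s ≤ m * s := by
  have : sigmaT F FT m s ≤ ∫ _, m * s ∂FT := by
    refine integral_mono_ae (sigma_integrable hT hF hi hm hs) (integrable_const _) ?_
    filter_upwards [ae_nonneg_of_Iio hT] with t ht
    split_ifs with h
    · exact le_rfl
    · have h1 := LS_lower hF hi hm (mul_nonneg ht hs)
      rw [div_le_iff₀ (lt_of_le_of_ne ht (Ne.symm h))]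
      linarith
  simpa using this

/-- The gap `m s - σ(s)` is governed by `E[T]` and the second moment of `F`. -/
lemma sigma_gap_le (hT : FT (Set.Iio 0) = 0) (hF : F (Set.Iio 0) = 0)
    (hi : Integrable (fun x => x) F) (hm : ∫ x, x ∂F = m) (hTi : Integrable (fun t => t) FT)
    {C : ℝ} (hup : ∀ s, 0 ≤ s → LS F s ≤ 1 - m * s + C * s ^ 2) {s : ℝ}
    (hs : 0 ≤ s) : m * s - (∫ t, t ∂FT) * C * s ^ 2 ≤ sigmaT F FT m s := by
  have h1 : ∫ t, (m * s - t * (C * s ^ 2)) ∂FT = m * s - (∫ t, t ∂FT) * C * s ^ 2 := by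
    rw [integral_sub (integrable_const _) (hTi.mul_const _), integral_const,
      probReal_univ, one_smul, integral_mul_const, mul_assoc]
  rw [← h1]
  refine integral_mono_ae ((integrable_const _).sub (hTi.mul_const _))
    (sigma_integrable hT hF hi hm hs) ?_
  filter_upwards [ae_nonneg_of_Iio hT] with t ht
  split_ifs with h
  · simp [h]
  · have h1 := hup _ (mul_nonneg ht hs)
    rw [le_div_iff₀ (lt_of_le_of_ne ht (Ne.symm h))]
    nlinarith

/-- The distance `sup |F̂ - Ĝ| / s²` shrinks by the factor `E[T]` under `F ↦ σ`. -/
lemma sigma_contract {G : Measure ℝ} [IsProbabilityMeasure G] (hT : FT (Set.Iio 0) = 0)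
    (hF : F (Set.Iio 0) = 0) (hG : G (Set.Iio 0) = 0)
    (hFi : Integrable (fun x => x) F) (hFm : ∫ x, x ∂F = m)
    (hGi : Integrable (fun x => x) G) (hGm : ∫ x, x ∂G = m) (hTi : Integrable (fun t => t) FT)
    {K : ℝ} (hK : ∀ s, 0 ≤ s → |LS F s - LS G s| ≤ K * s ^ 2) {s : ℝ} (hs : 0 ≤ s) :
    |sigmaT F FT m s - sigmaT G FT m s| ≤ (∫ t, t ∂FT) * K * s ^ 2 := by
  rw [sigmaT, sigmaT, ← integral_sub (sigma_integrable hT hF hFi hFm hs)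
    (sigma_integrable hT hG hGi hGm hs), mul_assoc, ← integral_mul_const, ← Real.norm_eq_abs]
  refine norm_integral_le_of_norm_le (hTi.mul_const _) ?_
  filter_upwards [ae_nonneg_of_Iio hT] with t ht
  split_ifs with h
  · simp [h]
  · have h1 := hK _ (mul_nonneg ht hs)
    rw [← sub_div, norm_div, Real.norm_eq_abs, Real.norm_eq_abs, abs_of_nonneg ht,
      div_le_iff₀ (lt_of_le_of_ne ht (Ne.symm h)),
      show 1 - LS F (t * s) - (1 - LS G (t * s)) = -(LS F (t * s) - LS G (t * s)) by ring, abs_neg]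
    linarith [h1, show t * (K * s ^ 2) * t = K * (t * s) ^ 2 by ring]

/-- First-order behaviour of `σ` along a null sequence `r n ~ c · sq0 n`. -/
lemma tendsto_sigma (hT : FT (Set.Iio 0) = 0) (hF : F (Set.Iio 0) = 0)
    (hi : Integrable (fun x => x) F) (hm : ∫ x, x ∂F = m) (hm0 : 0 ≤ m) {r : ℕ → ℝ} {c : ℝ}
    (hr0 : ∀ n, 0 ≤ r n) (hrc : ∀ n, r n ≤ c * sq0 n)
    (hr : Tendsto (fun n => r n / sq0 n) atTop (𝓝 c)) :
    Tendsto (fun n => sigmaT F FT m (r n) / sq0 n) atTop (𝓝 (m * c)) := by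
  have hc : 0 ≤ c := ge_of_tendsto' hr fun n => div_nonneg (hr0 n) (sq0_pos n).le
  have hrt : Tendsto r atTop (𝓝 0) :=
    squeeze_zero hr0 hrc (by simpa using tendsto_sq0.const_mul c)
  have hq := measurable_expQ
  have key : Tendsto (fun n => ENNReal.ofReal (sigmaT F FT m (r n) / sq0 n)) atTop
      (𝓝 (ENNReal.ofReal (m * c))) := by
    have e : ∀ n, ENNReal.ofReal (sigmaT F FT m (r n) / sq0 n) =
        ∫⁻ t, ∫⁻ x, ENNReal.ofReal
          ((1 / sq0 n) * (r n * x * (1 - t * r n * x * expQ (t * r n * x)))) ∂F ∂FT := by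
      intro n
      rw [← (sigma_double hT hF hi (hr0 n) (one_div_nonneg.2 (sq0_pos n).le)).2,
        sigma_eq hT hF hm (hr0 n)]
      simp_rw [integral_const_mul]
      congr 1
      ring
    simp_rw [e]
    have e2 : ENNReal.ofReal (m * c) = ∫⁻ _t, ∫⁻ x, ENNReal.ofReal (c * x) ∂F ∂FT := by
      rw [lintegral_const, measure_univ, mul_one, ← ofReal_integral_eq_lintegral_ofReal
        (hi.const_mul c), integral_const_mul, hm, mul_comm]
      filter_upwards [ae_nonneg_of_Iio hF] with x hx using mul_nonneg hc hx
    rw [e2]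
    refine tendsto_double hT hF (H := fun _ x => c * x) (fun n => ?_) (fun n t x ht hx => ?_)
      fun t x ht hx => ?_
    · have : Measurable fun p : ℝ × ℝ => expQ (p.1 * r n * p.2) := hq.comp (by fun_prop)
      simp only [Function.uncurry_def]
      fun_prop
    · have h1 := mul_expQ_nonneg (x := t * r n * x) (mul_nonneg (mul_nonneg ht (hr0 n)) hx)
      have h2 := sq0_pos n
      rw [div_mul_eq_mul_div, one_mul, div_le_iff₀ h2]
      have h3 : 0 ≤ r n * x := mul_nonneg (hr0 n) hx
      nlinarith [mul_le_mul_of_nonneg_right (hrc n) hx]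
    · have h1 : Tendsto (fun n => t * r n * x) atTop (𝓝 0) := by
        simpa using (hrt.const_mul t).mul_const x
      have h2 := ((h1.mul (tendsto_expQ.comp h1)).const_sub 1).const_mul x
      have h3 := hr.mul h2
      simp only [zero_mul, sub_zero, mul_one] at h3
      refine h3.congr fun n => ?_
      simp only [Function.comp]
      ring
  have := (ENNReal.tendsto_toReal ENNReal.ofReal_ne_top).comp key
  rw [ENNReal.toReal_ofReal (by positivity)] at this
  refine this.congr fun n => ?_
  exact ENNReal.toReal_ofReal (div_nonneg (sigma_nonneg hT hF hm0 (hr0 n)) (sq0_pos n).le)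

/-- Second-order behaviour of `σ`; the moments on the right may be infinite. -/
lemma tendsto_sigma_gap (hT : FT (Set.Iio 0) = 0) (hF : F (Set.Iio 0) = 0)
    (hi : Integrable (fun x => x) F) (hm : ∫ x, x ∂F = m) {r : ℕ → ℝ} {c : ℝ}
    (hr0 : ∀ n, 0 ≤ r n) (hrc : ∀ n, r n ≤ c * sq0 n)
    (hr : Tendsto (fun n => r n / sq0 n) atTop (𝓝 c)) :
    Tendsto (fun n => ENNReal.ofReal ((m * r n - sigmaT F FT m (r n)) / sq0 n ^ 2)) atTop
      (𝓝 ((∫⁻ t, ENNReal.ofReal t ∂FT) * (∫⁻ x, ENNReal.ofReal (x ^ 2) ∂F) *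
        ENNReal.ofReal (c ^ 2 / 2))) := by
  have hc : 0 ≤ c := ge_of_tendsto' hr fun n => div_nonneg (hr0 n) (sq0_pos n).le
  have hrt : Tendsto r atTop (𝓝 0) :=
    squeeze_zero hr0 hrc (by simpa using tendsto_sq0.const_mul c)
  have hq := measurable_expQ
  have e : ∀ n, ENNReal.ofReal ((m * r n - sigmaT F FT m (r n)) / sq0 n ^ 2) =
      ∫⁻ t, ∫⁻ x, ENNReal.ofReal
        (t * (r n * x) ^ 2 * expQ (t * r n * x) / sq0 n ^ 2) ∂F ∂FT := by
    intro n
    have hk : 0 ≤ 1 / sq0 n ^ 2 := by have := sq0_pos n; positivity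
    have hI := (sigma_double hT hF hi (hr0 n) hk).1
    have hJ : Integrable (Function.uncurry fun _t x : ℝ => 1 / sq0 n ^ 2 * (r n * x))
        (FT.prod F) := ((hi.const_mul _).const_mul _).comp_snd FT
    rw [← (double_integral hT hF (H := fun _ x => 1 / sq0 n ^ 2 * (r n * x)) (?_) hJ ?_ ?_).2]
    · congr 1
      have h1 : (m * r n - sigmaT F FT m (r n)) / sq0 n ^ 2 =
          (∫ t, ∫ x, 1 / sq0 n ^ 2 * (r n * x) ∂F ∂FT) -
          ∫ t, ∫ x, 1 / sq0 n ^ 2 * (r n * x * (1 - t * r n * x * expQ (t * r n * x))) ∂F ∂FT := by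
        rw [sigma_eq hT hF hm (hr0 n)]
        have h0 : ∫ x, r n * x ∂F = r n * m := by rw [integral_const_mul, hm]
        simp_rw [integral_const_mul (1 / sq0 n ^ 2), h0]
        rw [integral_const, probReal_univ, one_smul]
        ring
      rw [h1]
      have h2 := integral_prod _ hI
      have h3 := integral_prod _ hJ
      simp only [Function.uncurry_apply_pair] at h2 h3
      have h4 := integral_prod _ (hJ.sub hI)
      simp only [Pi.sub_apply, Function.uncurry_apply_pair] at h4
      rw [← h2, ← h3, ← integral_sub hJ hI]
      refine h4.symm ▸ ?_
      refine integral_congr_ae (Eventually.of_forall fun t => ?_)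
      refine integral_congr_ae (Eventually.of_forall fun x => ?_)
      simp only
      ring
    · have : Measurable fun p : ℝ × ℝ => expQ (p.1 * r n * p.2) := hq.comp (by fun_prop)
      simp only [Function.uncurry_def]
      fun_prop
    · intro t x ht hx
      have := expQ_nonneg (t * r n * x)
      positivity
    · intro t x ht hx
      have h1 := mul_expQ_le_one (x := t * r n * x) (mul_nonneg (mul_nonneg ht (hr0 n)) hx)
      rw [div_mul_eq_mul_div, one_mul]
      have h3 : 0 ≤ r n * x := mul_nonneg (hr0 n) hx
      have h4 : t * (r n * x) ^ 2 * expQ (t * r n * x) ≤ r n * x := by nlinarith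
      gcongr
  simp_rw [e]
  have e2 : (∫⁻ t, ENNReal.ofReal t ∂FT) * (∫⁻ x, ENNReal.ofReal (x ^ 2) ∂F) *
        ENNReal.ofReal (c ^ 2 / 2) =
      ∫⁻ t, ∫⁻ x, ENNReal.ofReal (t * x ^ 2 * (c ^ 2 / 2)) ∂F ∂FT := by
    have : ∀ᵐ t ∂FT, ∫⁻ x, ENNReal.ofReal (t * x ^ 2 * (c ^ 2 / 2)) ∂F =
        ENNReal.ofReal t * ((∫⁻ x, ENNReal.ofReal (x ^ 2) ∂F) * ENNReal.ofReal (c ^ 2 / 2)) := by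
      filter_upwards [ae_nonneg_of_Iio hT] with t ht
      rw [← lintegral_mul_const _ (by fun_prop), ← lintegral_const_mul _ (by fun_prop)]
      refine lintegral_congr fun x => ?_
      rw [← ENNReal.ofReal_mul (sq_nonneg x), ← ENNReal.ofReal_mul ht, mul_assoc]
    rw [lintegral_congr_ae this, lintegral_mul_const _ (by fun_prop), mul_assoc]
  rw [e2]
  refine tendsto_double hT hF (H := fun t x => t * x ^ 2 * (c ^ 2 / 2)) (fun n => ?_)
    (fun n t x ht hx => ?_) fun t x ht hx => ?_
  · have : Measurable fun p : ℝ × ℝ => expQ (p.1 * r n * p.2) := hq.comp (by fun_prop)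
    simp only [Function.uncurry_def]
    fun_prop
  · have h1 := expQ_le (x := t * r n * x) (mul_nonneg (mul_nonneg ht (hr0 n)) hx)
    have h2 := sq0_pos n
    have h3 : r n ^ 2 ≤ (c * sq0 n) ^ 2 := pow_le_pow_left₀ (hr0 n) (hrc n) 2
    rw [div_le_iff₀ (by positivity)]
    calc t * (r n * x) ^ 2 * expQ (t * r n * x) ≤ t * (r n * x) ^ 2 * (1 / 2) := by gcongr
      _ = t * x ^ 2 * (1 / 2) * r n ^ 2 := by ring
      _ ≤ t * x ^ 2 * (1 / 2) * (c * sq0 n) ^ 2 := by gcongr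
      _ = _ := by ring
  · have h1 : Tendsto (fun n => t * r n * x) atTop (𝓝 0) := by
      simpa using (hrt.const_mul t).mul_const x
    have h3 := ((hr.pow 2).mul (tendsto_expQ.comp h1)).const_mul (t * x ^ 2)
    rw [mul_one_div] at h3
    refine h3.congr fun n => ?_
    simp only [Function.comp]
    ring

end Sigma

lemma LS_dirac (s : ℝ) : LS (Measure.dirac 1) s = Real.exp (-s) := by simp [LS]

/-- `σ_B` is the special case of `σ` in which `F` is the unit mass at `1` and `m = 1`. -/
lemma sigmaB_eq {FB : Measure ℝ} [IsProbabilityMeasure FB] (hB : FB (Set.Iio 0) = 0) {u : ℝ}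
    (hu : 0 ≤ u) : sigmaB FB u = sigmaT (Measure.dirac 1) FB 1 u := by
  unfold sigmaB sigmaT LS
  rw [intervalIntegral.integral_of_le hu, integral_integral_swap]
  · refine integral_congr_ae ?_
    filter_upwards [ae_nonneg_of_Iio hB] with b hb
    rw [← intervalIntegral.integral_of_le hu]
    split_ifs with h
    · simp [h]
    · have : ∀ t : ℝ, Real.exp (-(t * b)) = Real.exp ((-b) * t) := fun t => by ring_nf
      simp_rw [this]
      rw [intervalIntegral.integral_comp_mul_left (fun x => Real.exp x) (neg_ne_zero.2 h)]
      simp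
      field_simp
      ring
  · have hfin : IsFiniteMeasure (volume.restrict (Set.Ioc 0 u)) :=
      ⟨by simp⟩
    refine (integrable_const (1 : ℝ)).mono' (by
      simp only [Function.uncurry_def]; fun_prop) ?_
    have h1 : ∀ᵐ t ∂(volume.restrict (Set.Ioc 0 u)), 0 ≤ t := by
      filter_upwards [ae_restrict_mem measurableSet_Ioc] with t ht using ht.1.le
    filter_upwards [Measure.quasiMeasurePreserving_fst.ae h1,
      Measure.quasiMeasurePreserving_snd.ae (ae_nonneg_of_Iio hB)] with p hp1 hp2
    rw [Real.norm_eq_abs]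
    simp only [Function.uncurry_def, Real.abs_exp]
    exact Real.exp_le_one_iff.2 (by nlinarith)

lemma dirac_facts : (Measure.dirac (1 : ℝ)) (Set.Iio 0) = 0 ∧
    Integrable (fun x : ℝ => x) (Measure.dirac (1 : ℝ)) ∧ ∫ x, x ∂(Measure.dirac (1 : ℝ)) = 1 := by
  refine ⟨by simp, ?_, by simp⟩
  exact integrable_dirac (by simp)

lemma sigmaB_lipschitz {FB : Measure ℝ} [IsProbabilityMeasure FB] (hB : FB (Set.Iio 0) = 0)
    {u v : ℝ} (hu : 0 ≤ u) (hv : 0 ≤ v) : |sigmaB FB u - sigmaB FB v| ≤ |u - v| := by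
  have hii : ∀ w, 0 ≤ w → IntervalIntegrable (LS FB) volume 0 w := by
    intro w hw
    refine (intervalIntegrable_const (c := (1 : ℝ))).mono_fun'
      (measurable_LS FB).aestronglyMeasurable ?_
    filter_upwards [ae_restrict_mem measurableSet_uIoc] with t ht
    rw [Set.uIoc_of_le hw] at ht
    rw [Real.norm_eq_abs, abs_of_nonneg (LS_nonneg FB t)]
    exact LS_le_one hB ht.1.le
  unfold sigmaB
  rw [intervalIntegral.integral_interval_sub_left (hii u hu) (hii v hv)]
  have := intervalIntegral.norm_integral_le_of_norm_le_const (f := LS FB) (a := v) (b := u)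
    (C := 1) fun t ht => by
      have ht0 : 0 ≤ t := by
        rcases Set.mem_uIoc.1 ht with h | h <;> linarith [h.1]
      rw [Real.norm_eq_abs, abs_of_nonneg (LS_nonneg FB t)]
      exact LS_le_one hB ht0
  simpa using this


/-! ### Bernstein functions -/

/-- `ψ` is a nonnegative function all of whose powers `e^{-g ψ}`, `g ≥ 0`, are positive on
exponential sums; this plays the role of the class of Bernstein functions. -/
def Bern (ψ : ℝ → ℝ) : Prop :=
  (∀ s, 0 ≤ s → 0 ≤ ψ s) ∧ ∀ g : ℝ, 0 ≤ g → ExpPos (fun s => Real.exp (-(g * ψ s)))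

lemma Bern.congr {ψ χ : ℝ → ℝ} (hψ : Bern ψ) (h : ∀ s, 0 ≤ s → ψ s = χ s) : Bern χ :=
  ⟨fun s hs => h s hs ▸ hψ.1 s hs, fun g hg => (hψ.2 g hg).congr fun s hs => by rw [h s hs]⟩

lemma bern_id : Bern (fun s => s) :=
  ⟨fun _ hs => hs, fun g hg => (expPos_exp hg).congr fun s _ => by rw [mul_comm]⟩

lemma Bern.const_mul {ψ : ℝ → ℝ} (hψ : Bern ψ) {k : ℝ} (hk : 0 ≤ k) : Bern (fun s => k * ψ s) :=
  ⟨fun s hs => mul_nonneg hk (hψ.1 s hs), fun g hg =>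
    (hψ.2 (g * k) (mul_nonneg hg hk)).congr fun s _ => by rw [mul_assoc]⟩

lemma Bern.lim {ψ : ℕ → ℝ → ℝ} {χ : ℝ → ℝ} (hψ : ∀ n, Bern (ψ n))
    (h : ∀ s, 0 ≤ s → Tendsto (fun n => ψ n s) atTop (𝓝 (χ s))) : Bern χ :=
  ⟨fun s hs => ge_of_tendsto' (h s hs) fun n => (hψ n).1 s hs, fun g hg =>
    ExpPos.lim (fun n => (hψ n).2 g hg) fun s hs =>
      (Real.continuous_exp.tendsto _).comp ((h s hs).const_mul g).neg⟩

/-- The compound Poisson exponent. -/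
lemma ExpPos.bern {L : ℝ → ℝ} (hL : ExpPos L) (h1 : ∀ s, 0 ≤ s → L s ≤ 1) {c : ℝ} (hc : 0 ≤ c) :
    Bern (fun s => c * (1 - L s)) := by
  refine ⟨fun s hs => mul_nonneg hc (by linarith [h1 s hs]), fun g hg => ?_⟩
  refine (((hL.const_mul (mul_nonneg hg hc)).exp).const_mul (Real.exp_pos (-(g * c))).le).congr
    fun s _ => ?_
  rw [← Real.exp_add]
  ring_nf

/-- Mixtures are limits of compound Poisson exponents: `∫ h = lim ε⁻¹ (1 - ∫ e^{-ε h})`. -/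
lemma Bern.integral {Ω : Type*} [MeasurableSpace Ω] {ν : Measure Ω} [IsProbabilityMeasure ν]
    {h : Ω → ℝ → ℝ} (hh : ∀ᵐ ω ∂ν, Bern (h ω)) (hi : ∀ s, 0 ≤ s → Integrable (fun ω => h ω s) ν) :
    Bern (fun s => ∫ ω, h ω s ∂ν) := by
  have hint : ∀ n s, 0 ≤ s → Integrable (fun ω => Real.exp (-(sq0 n * h ω s))) ν := by
    intro n s hs
    refine (integrable_const (1 : ℝ)).mono' (Real.continuous_exp.comp_aestronglyMeasurable
      ((hi s hs).1.const_mul (sq0 n)).neg) ?_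
    filter_upwards [hh] with ω hω
    rw [Real.norm_eq_abs, Real.abs_exp, Real.exp_le_one_iff]
    have := mul_nonneg (sq0_pos n).le (hω.1 s hs)
    linarith
  refine Bern.lim (ψ := fun n s => (1 / sq0 n) * (1 - ∫ ω, Real.exp (-(sq0 n * h ω s)) ∂ν))
    (fun n => ExpPos.bern (ExpPos.integral (hh.mono fun ω hω => hω.2 _ (sq0_pos n).le)
      (hint n)) (fun s hs => ?_) (one_div_nonneg.2 (sq0_pos n).le)) fun s hs => ?_
  · have : ∫ ω, Real.exp (-(sq0 n * h ω s)) ∂ν ≤ ∫ _, (1 : ℝ) ∂ν := by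
      refine integral_mono_ae (hint n s hs) (integrable_const _) ?_
      filter_upwards [hh] with ω hω
      rw [Real.exp_le_one_iff]
      have := mul_nonneg (sq0_pos n).le (hω.1 s hs)
      linarith
    simpa using this
  · have e : ∀ n, (1 / sq0 n) * (1 - ∫ ω, Real.exp (-(sq0 n * h ω s)) ∂ν) =
        ∫ ω, (1 / sq0 n) * (1 - Real.exp (-(sq0 n * h ω s))) ∂ν := by
      intro n
      rw [integral_const_mul, integral_sub (integrable_const _) (hint n s hs), integral_const,
        probReal_univ, one_smul]
    simp_rw [e]
    refine tendsto_integral_of_dominated_convergence (fun ω => h ω s)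
      (fun n => (((integrable_const _).sub (hint n s hs)).const_mul _).1) (hi s hs)
      (fun n => ?_) ?_
    · filter_upwards [hh] with ω hω
      have h0 := sq0_pos n
      have h1 := hω.1 s hs
      have h2 : Real.exp (-(sq0 n * h ω s)) ≤ 1 := by
        rw [Real.exp_le_one_iff]
        have := mul_nonneg h0.le h1
        linarith
      rw [Real.norm_eq_abs, abs_of_nonneg (mul_nonneg (one_div_nonneg.2 h0.le) (by linarith)),
        div_mul_eq_mul_div, one_mul, div_le_iff₀ h0]
      have := Real.add_one_le_exp (-(sq0 n * h ω s))
      linarith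
    · filter_upwards [hh] with ω hω
      have h1 : Tendsto (fun n => sq0 n * h ω s) atTop (𝓝 0) := by
        simpa using tendsto_sq0.mul_const (h ω s)
      have h2 := ((h1.mul (tendsto_expQ.comp h1)).const_sub 1).const_mul (h ω s)
      simp only [zero_mul, sub_zero, mul_one] at h2
      refine h2.congr fun n => ?_
      have h0 := (sq0_pos n).ne'
      rw [exp_neg_eq]
      simp only [Function.comp]
      field_simp
      ring

lemma Bern.comp_LS {F : Measure ℝ} [IsProbabilityMeasure F] (hF : F (Set.Iio 0) = 0) {ψ : ℝ → ℝ}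
    (hψ : Bern ψ) : ExpPos (fun s => LS F (ψ s)) := by
  refine ExpPos.integral (ν := F) (h := fun x s => Real.exp (-(ψ s * x))) ?_
    fun s hs => integrable_exp hF (hψ.1 s hs)
  filter_upwards [ae_nonneg_of_Iio hF] with x hx
  exact (hψ.2 x hx).congr fun s _ => by rw [mul_comm]

/-- For `t > 0` the integrand `(1 - F̂(t ψ)) / t` of `σ(ψ)` is a compound Poisson exponent, at
`t = 0` it is `m ψ`; `σ(ψ)` is the mixture over `F_T`. -/
lemma Bern.sigma {F FT : Measure ℝ} [IsProbabilityMeasure F] [IsProbabilityMeasure FT] {m : ℝ}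
    (hT : FT (Set.Iio 0) = 0) (hF : F (Set.Iio 0) = 0)
    (hi : Integrable (fun x => x) F) (hm : ∫ x, x ∂F = m) (hm0 : 0 ≤ m) {ψ : ℝ → ℝ}
    (hψ : Bern ψ) : Bern (fun s => sigmaT F FT m (ψ s)) := by
  refine Bern.integral
    (h := fun t s => if t = 0 then m * ψ s else (1 - LS F (t * ψ s)) / t) ?_
    fun s hs => sigma_integrable hT hF hi hm (hψ.1 s hs)
  filter_upwards [ae_nonneg_of_Iio hT] with t ht
  by_cases h : t = 0
  · simpa only [h, if_true] using hψ.const_mul hm0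
  · simp only [h, if_false]
    refine (((hψ.const_mul ht).comp_LS hF).bern (fun s hs => LS_le_one hF
      (mul_nonneg ht (hψ.1 s hs))) (one_div_nonneg.2 ht)).congr fun s _ => ?_
    rw [div_mul_eq_mul_div, one_mul]

/-- Gamma mixtures of `e^{-g ψ}`. -/
lemma Bern.rpow {ψ : ℝ → ℝ} (hψ : Bern ψ) {l a : ℝ} (hl : 0 ≤ l) (ha : 0 ≤ a) :
    ExpPos (fun s => (1 + l * ψ s) ^ (-a)) := by
  rcases ha.eq_or_lt with rfl | ha
  · simpa using expPos_one
  have hr : ∀ s, 0 ≤ s → 0 < 1 + l * ψ s := fun s hs => by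
    have := mul_nonneg hl (hψ.1 s hs)
    linarith
  have hG := Real.Gamma_pos_of_pos ha
  have key : ExpPos (fun s => ∫ t in Set.Ioi (0 : ℝ),
      t ^ (a - 1) * Real.exp (-((1 + l * ψ s) * t))) := by
    refine ExpPos.integral (h := fun t s => t ^ (a - 1) * Real.exp (-((1 + l * ψ s) * t))) ?_
      fun s hs => ?_
    · filter_upwards [ae_restrict_mem measurableSet_Ioi] with t ht
      have ht : 0 < t := ht
      refine ((hψ.2 (t * l) (by positivity)).const_mul (k := t ^ (a - 1) * Real.exp (-t))
        (by positivity)).congr fun s _ => ?_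
      rw [mul_assoc, ← Real.exp_add]
      ring_nf
    · refine Integrable.of_integral_ne_zero ?_
      rw [Real.integral_rpow_mul_exp_neg_mul_Ioi ha (hr s hs)]
      have := Real.rpow_pos_of_pos (one_div_pos.2 (hr s hs)) a
      positivity
  refine (key.const_mul (inv_nonneg.2 hG.le)).congr fun s hs => ?_
  rw [Real.integral_rpow_mul_exp_neg_mul_Ioi ha (hr s hs), one_div, Real.inv_rpow (hr s hs).le,
    Real.rpow_neg (hr s hs).le]
  field_simp


/-! ### The gamma mixture `φ` -/

/-- `logQ w = (w - log (1 + w)) / w²`, extended by its limit `1/2` at `w = 0`. -/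
noncomputable def logQ (w : ℝ) : ℝ := if w = 0 then 1 / 2 else (w - Real.log (1 + w)) / w ^ 2

lemma log_one_add_eq (w : ℝ) : Real.log (1 + w) = w - w ^ 2 * logQ w := by
  unfold logQ
  split_ifs with h
  · simp [h]
  · field_simp
    ring

lemma tendsto_logQ : Tendsto logQ (𝓝 0) (𝓝 (1 / 2)) := by
  rw [tendsto_iff_dist_tendsto_zero]
  refine squeeze_zero' (Eventually.of_forall fun _ => dist_nonneg) (g := fun w => 2 * |w|) ?_ ?_
  · filter_upwards [Metric.ball_mem_nhds (0 : ℝ) (show (0 : ℝ) < 1 / 2 by norm_num)] with w hw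
    rw [Metric.mem_ball, dist_zero_right, Real.norm_eq_abs] at hw
    have h := Real.abs_log_sub_add_sum_range_le (x := -w) (by rw [abs_neg]; linarith) 2
    rw [Real.dist_eq]
    unfold logQ
    split_ifs with h0
    · simp
    · have h1 : 0 < |w| := abs_pos.2 h0
      rw [abs_neg] at h
      simp only [Finset.sum_range_succ, Finset.sum_range_zero] at h
      norm_num at h
      have e : (w - Real.log (1 + w)) / w ^ 2 - 1 / 2 =
          -(-w + w ^ 2 / 2 + Real.log (1 + w)) / w ^ 2 := by
        field_simp
        ring
      rw [e, abs_div, abs_neg, abs_of_nonneg (sq_nonneg w), div_le_iff₀ (by positivity)]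
      refine h.trans ?_
      rw [div_le_iff₀ (by linarith), ← sq_abs w]
      have : 0 ≤ |w| ^ 3 * (1 - 2 * |w|) := mul_nonneg (by positivity) (by linarith)
      nlinarith
  · have : Tendsto (fun w : ℝ => 2 * |w|) (𝓝 0) (𝓝 (2 * |0|)) :=
      (continuous_const.mul continuous_abs).tendsto 0
    simpa using this

lemma one_add_rpow_neg {w : ℝ} (hw : 0 ≤ w) (a : ℝ) :
    (1 + w) ^ (-a) = Real.exp (-(a * Real.log (1 + w))) := by
  rw [Real.rpow_def_of_pos (by linarith)]
  ring_nf

lemma rpow_neg_le_one {w a : ℝ} (hw : 0 ≤ w) (ha : 0 ≤ a) : (1 + w) ^ (-a) ≤ 1 :=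
  Real.rpow_le_one_of_one_le_of_nonpos (by linarith) (by linarith)

lemma rpow_neg_lower {w a : ℝ} (hw : 0 ≤ w) (ha : 0 ≤ a) : 1 - a * w ≤ (1 + w) ^ (-a) := by
  rw [one_add_rpow_neg hw]
  have h1 := Real.add_one_le_exp (-(a * Real.log (1 + w)))
  have h2 : a * Real.log (1 + w) ≤ a * w := by
    have := Real.log_le_sub_one_of_pos (show 0 < 1 + w by linarith)
    exact mul_le_mul_of_nonneg_left (by linarith) ha
  linarith

lemma rpow_neg_upper {w a : ℝ} (hw : 0 ≤ w) (ha : 0 ≤ a) :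
    (1 + w) ^ (-a) ≤ 1 - a * w + a * (a + 1) / 2 * w ^ 2 := by
  rw [one_add_rpow_neg hw]
  have hl0 : 0 ≤ Real.log (1 + w) := Real.log_nonneg (by linarith)
  have hl1 : Real.log (1 + w) ≤ w := by
    have := Real.log_le_sub_one_of_pos (show 0 < 1 + w by linarith)
    linarith
  have hl2 : w - w ^ 2 / 2 ≤ Real.log (1 + w) := by
    refine le_trans ?_ (Real.le_log_one_add_of_nonneg hw)
    rw [le_div_iff₀ (by linarith)]
    have : 0 ≤ w ^ 3 := by positivity
    nlinarith
  have h1 := exp_neg_le_quadratic (mul_nonneg ha hl0)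
  have h2 : (a * Real.log (1 + w)) ^ 2 ≤ (a * w) ^ 2 :=
    pow_le_pow_left₀ (mul_nonneg ha hl0) (mul_le_mul_of_nonneg_left hl1 ha) 2
  have h3 := mul_le_mul_of_nonneg_left hl2 ha
  nlinarith

/-- Exact second-order expansion of `(1 + w)^{-a}`. -/
lemma rpow_neg_expand {w : ℝ} (hw : 0 ≤ w) (a : ℝ) :
    (1 + w) ^ (-a) - 1 + a * w = w ^ 2 *
      ((a * (1 - w * logQ w)) ^ 2 * expQ (a * (w * (1 - w * logQ w))) + a * logQ w) := by
  rw [one_add_rpow_neg hw, exp_neg_eq, log_one_add_eq,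
    show w - w ^ 2 * logQ w = w * (1 - w * logQ w) by ring]
  ring

lemma rpow_neg_expand1 {w : ℝ} (hw : 0 ≤ w) (a : ℝ) :
    1 - (1 + w) ^ (-a) = w * (a - w *
      ((a * (1 - w * logQ w)) ^ 2 * expQ (a * (w * (1 - w * logQ w))) + a * logQ w)) := by
  linear_combination -(rpow_neg_expand hw a)

lemma rpow_neg_diff {w v a : ℝ} (hw : 0 ≤ w) (hwv : w ≤ v) (ha : 0 ≤ a) :
    |(1 + w) ^ (-a) - (1 + v) ^ (-a)| ≤ a * (v - w) := by
  have h1 : 0 < 1 + w := by linarith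
  have hd : 0 ≤ (v - w) / (1 + w) := div_nonneg (by linarith) h1.le
  have e : (1 + v) ^ (-a) = (1 + w) ^ (-a) * (1 + (v - w) / (1 + w)) ^ (-a) := by
    rw [← Real.mul_rpow h1.le (by linarith)]
    congr 1
    field_simp
    ring
  have p1 := rpow_neg_le_one hw ha
  have p0 : 0 ≤ (1 + w) ^ (-a) := Real.rpow_nonneg h1.le _
  have q1 := rpow_neg_le_one hd ha
  have q2 := rpow_neg_lower hd ha
  have d1 : (v - w) / (1 + w) ≤ v - w := div_le_self (by linarith) (by linarith)
  have d2 := mul_le_mul_of_nonneg_left d1 ha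
  rw [e, show ∀ x y : ℝ, x - x * y = x * (1 - y) by intros; ring,
    abs_of_nonneg (mul_nonneg p0 (by linarith))]
  nlinarith

/-- `φ(u) = E[(1 + Λ u)^{-A}]`. -/
noncomputable def phi (FA FL : Measure ℝ) (u : ℝ) : ℝ :=
  ∫ l, ∫ a, (1 + l * u) ^ (-a) ∂FA ∂FL

section Phi

variable {FA FL : Measure ℝ} [IsProbabilityMeasure FA] [IsProbabilityMeasure FL]

lemma phi_zero : phi FA FL 0 = 1 := by
  simp [phi]

omit [IsProbabilityMeasure FA] [IsProbabilityMeasure FL] in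
lemma ae_quad (hA : FA (Set.Iio 0) = 0) (hL : FL (Set.Iio 0) = 0) :
    ∀ᵐ p ∂(FL.prod FA), 0 ≤ p.1 ∧ 0 ≤ p.2 :=
  (Measure.quasiMeasurePreserving_fst.ae (ae_nonneg_of_Iio hL)).and
    (Measure.quasiMeasurePreserving_snd.ae (ae_nonneg_of_Iio hA))

lemma measurable_pow (u : ℝ) : Measurable fun p : ℝ × ℝ => (1 + p.1 * u) ^ (-p.2) :=
  Measurable.pow (by fun_prop) (by fun_prop)

lemma integrable_pow (hA : FA (Set.Iio 0) = 0) (hL : FL (Set.Iio 0) = 0) {u : ℝ} (hu : 0 ≤ u) :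
    Integrable (fun p : ℝ × ℝ => (1 + p.1 * u) ^ (-p.2)) (FL.prod FA) := by
  refine (integrable_const (1 : ℝ)).mono' (measurable_pow u).aestronglyMeasurable ?_
  filter_upwards [ae_quad hA hL] with p hp
  have h := mul_nonneg hp.1 hu
  rw [Real.norm_eq_abs, abs_of_nonneg (Real.rpow_nonneg (by linarith) _)]
  exact rpow_neg_le_one h hp.2

lemma phi_prod (hA : FA (Set.Iio 0) = 0) (hL : FL (Set.Iio 0) = 0) {u : ℝ} (hu : 0 ≤ u) :
    phi FA FL u = ∫ p, (1 + p.1 * u) ^ (-p.2) ∂(FL.prod FA) :=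
  (integral_prod _ (integrable_pow hA hL hu)).symm

lemma expPos_phi (hA : FA (Set.Iio 0) = 0) (hL : FL (Set.Iio 0) = 0) {ψ : ℝ → ℝ}
    (hψ : Bern ψ) : ExpPos (fun s => phi FA FL (ψ s)) := by
  refine (ExpPos.integral (ν := FL.prod FA)
    (h := fun p s => (1 + p.1 * ψ s) ^ (-p.2)) ?_
    fun s hs => integrable_pow hA hL (hψ.1 s hs)).congr
    fun s hs => (phi_prod hA hL (hψ.1 s hs)).symm
  filter_upwards [ae_quad hA hL] with p hp using hψ.rpow hp.1 hp.2

/-- First-order behaviour of `φ` along a null sequence; the moments may be infinite. -/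
lemma tendsto_phi_one (hA : FA (Set.Iio 0) = 0) (hL : FL (Set.Iio 0) = 0) {r : ℕ → ℝ} {c : ℝ}
    (hr0 : ∀ n, 0 ≤ r n) (hrc : ∀ n, r n ≤ c * sq0 n)
    (hr : Tendsto (fun n => r n / sq0 n) atTop (𝓝 c)) :
    Tendsto (fun n => ENNReal.ofReal ((1 - phi FA FL (r n)) / sq0 n)) atTop
      (𝓝 ((∫⁻ a, ENNReal.ofReal a ∂FA) * (∫⁻ l, ENNReal.ofReal l ∂FL) * ENNReal.ofReal c)) := by
  have hc : 0 ≤ c := ge_of_tendsto' hr fun n => div_nonneg (hr0 n) (sq0_pos n).le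
  have hrt : Tendsto r atTop (𝓝 0) :=
    squeeze_zero hr0 hrc (by simpa using tendsto_sq0.const_mul c)
  have hm : ∀ n, Measurable (Function.uncurry fun l a : ℝ => (1 - (1 + l * r n) ^ (-a)) / sq0 n) :=
    fun n => (measurable_const.sub (measurable_pow (r n))).div_const _
  have e : ∀ n, ENNReal.ofReal ((1 - phi FA FL (r n)) / sq0 n) =
      ∫⁻ l, ∫⁻ a, ENNReal.ofReal ((1 - (1 + l * r n) ^ (-a)) / sq0 n) ∂FA ∂FL := by
    intro n
    have h0 := sq0_pos n
    have hd := double_integral hL hA (g := fun l a => (1 - (1 + l * r n) ^ (-a)) / sq0 n)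
      (H := fun _ _ => 1 / sq0 n) (hm n) (integrable_const (1 / sq0 n))
      (fun l a hl ha => div_nonneg
        (by linarith [rpow_neg_le_one (mul_nonneg hl (hr0 n)) ha]) h0.le)
      (fun l a hl ha => by
        have : 0 ≤ (1 + l * r n) ^ (-a) :=
          Real.rpow_nonneg (by linarith [mul_nonneg hl (hr0 n)]) _
        gcongr
        linarith)
    rw [← hd.2]
    congr 1
    rw [phi_prod hA hL (hr0 n)]
    refine Eq.trans ?_ (integral_prod _ hd.1)
    simp only [Function.uncurry_def]
    rw [integral_div, integral_sub (integrable_const _) (integrable_pow hA hL (hr0 n)),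
      integral_const, probReal_univ, one_smul]
  simp_rw [e]
  have e2 : (∫⁻ a, ENNReal.ofReal a ∂FA) * (∫⁻ l, ENNReal.ofReal l ∂FL) * ENNReal.ofReal c =
      ∫⁻ l, ∫⁻ a, ENNReal.ofReal (a * l * c) ∂FA ∂FL := by
    have : ∀ᵐ l ∂FL, ∫⁻ a, ENNReal.ofReal (a * l * c) ∂FA =
        ENNReal.ofReal l * ((∫⁻ a, ENNReal.ofReal a ∂FA) * ENNReal.ofReal c) := by
      filter_upwards [ae_nonneg_of_Iio hL] with l hl
      rw [← lintegral_mul_const _ (by fun_prop), ← lintegral_const_mul _ (by fun_prop)]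
      refine lintegral_congr_ae ?_
      filter_upwards [ae_nonneg_of_Iio hA] with a ha
      rw [← ENNReal.ofReal_mul ha, ← ENNReal.ofReal_mul hl]
      ring_nf
    rw [lintegral_congr_ae this, lintegral_mul_const _ (by fun_prop)]
    ring
  rw [e2]
  refine tendsto_double hL hA (H := fun l a => a * l * c) hm (fun n l a hl ha => ?_)
    fun l a hl ha => ?_
  · have h1 := rpow_neg_lower (mul_nonneg hl (hr0 n)) ha
    rw [div_le_iff₀ (sq0_pos n)]
    have := mul_le_mul_of_nonneg_left (hrc n) (mul_nonneg ha hl)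
    linarith
  · have hw : Tendsto (fun n => l * r n) atTop (𝓝 0) := by simpa using hrt.const_mul l
    have hq := tendsto_logQ.comp hw
    have h1 : Tendsto (fun n => 1 - l * r n * logQ (l * r n)) atTop (𝓝 (1 - 0 * (1 / 2))) :=
      (hw.mul hq).const_sub 1
    have h2 : Tendsto (fun n => a * (l * r n * (1 - l * r n * logQ (l * r n)))) atTop (𝓝 0) := by
      simpa using (hw.mul h1).const_mul a
    have h3 := ((h1.const_mul a).pow 2).mul (tendsto_expQ.comp h2)
    have h4 := (hr.const_mul l).mul ((hw.mul (h3.add (hq.const_mul a))).const_sub a)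
    have e3 : l * c * (a - 0 * ((a * (1 - 0 * (1 / 2))) ^ 2 * (1 / 2) + a * (1 / 2))) =
      a * l * c := by ring
    rw [e3] at h4
    refine h4.congr fun n => ?_
    rw [rpow_neg_expand1 (mul_nonneg hl (hr0 n))]
    simp only [Function.comp]
    ring

lemma first_moment (hAi : Integrable (fun a => a) FA) (hLi : Integrable (fun l => l) FL) :
    Integrable (fun p : ℝ × ℝ => p.1 * p.2) (FL.prod FA) ∧
      ∫ p : ℝ × ℝ, p.1 * p.2 ∂(FL.prod FA) = (∫ a, a ∂FA) * (∫ l, l ∂FL) :=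
  ⟨hLi.mul_prod hAi, (integral_prod_mul (fun l => l) (fun a => a)).trans (mul_comm _ _)⟩

/-- Second-order behaviour of `φ` along a null sequence; the second moments may be infinite. -/
lemma tendsto_phi_two (hA : FA (Set.Iio 0) = 0) (hL : FL (Set.Iio 0) = 0)
    (hAi : Integrable (fun a => a) FA) (hLi : Integrable (fun l => l) FL)
    (h1 : (∫ a, a ∂FA) * (∫ l, l ∂FL) = 1) {r : ℕ → ℝ} {c : ℝ}
    (hr0 : ∀ n, 0 ≤ r n) (hrc : ∀ n, r n ≤ c * sq0 n)
    (hr : Tendsto (fun n => r n / sq0 n) atTop (𝓝 c)) :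
    Tendsto (fun n => ENNReal.ofReal ((phi FA FL (r n) - 1 + r n) / sq0 n ^ 2)) atTop
      (𝓝 (((∫⁻ a, ENNReal.ofReal (a ^ 2) ∂FA) + (∫⁻ a, ENNReal.ofReal a ∂FA)) *
        (∫⁻ l, ENNReal.ofReal (l ^ 2) ∂FL) * ENNReal.ofReal (c ^ 2 / 2))) := by
  have hc : 0 ≤ c := ge_of_tendsto' hr fun n => div_nonneg (hr0 n) (sq0_pos n).le
  have hrt : Tendsto r atTop (𝓝 0) :=
    squeeze_zero hr0 hrc (by simpa using tendsto_sq0.const_mul c)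
  have hm : ∀ n, Measurable (Function.uncurry fun l a : ℝ =>
      ((1 + l * r n) ^ (-a) - 1 + a * (l * r n)) / sq0 n ^ 2) := fun n =>
    (((measurable_pow (r n)).sub measurable_const).add (by fun_prop)).div_const _
  obtain ⟨hP, hP1⟩ := first_moment hAi hLi
  have e : ∀ n, ENNReal.ofReal ((phi FA FL (r n) - 1 + r n) / sq0 n ^ 2) =
      ∫⁻ l, ∫⁻ a, ENNReal.ofReal
        (((1 + l * r n) ^ (-a) - 1 + a * (l * r n)) / sq0 n ^ 2) ∂FA ∂FL := by
    intro n
    have h0 := sq0_pos n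
    have hd := double_integral hL hA
      (g := fun l a => ((1 + l * r n) ^ (-a) - 1 + a * (l * r n)) / sq0 n ^ 2)
      (H := fun l a => l * a * (r n / sq0 n ^ 2)) (hm n) (hP.mul_const (r n / sq0 n ^ 2))
      (fun l a hl ha => div_nonneg
        (by linarith [rpow_neg_lower (mul_nonneg hl (hr0 n)) ha]) (by positivity))
      (fun l a hl ha => by
        have := rpow_neg_le_one (mul_nonneg hl (hr0 n)) ha
        rw [mul_div_assoc']
        gcongr
        linarith)
    rw [← hd.2]
    congr 1
    rw [phi_prod hA hL (hr0 n)]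
    refine Eq.trans ?_ (integral_prod _ hd.1)
    simp only [Function.uncurry_def]
    have e4 : ∀ p : ℝ × ℝ, p.2 * (p.1 * r n) = p.1 * p.2 * r n := fun p => by ring
    simp_rw [e4]
    have hI : Integrable (fun p : ℝ × ℝ => (1 + p.1 * r n) ^ (-p.2) - 1) (FL.prod FA) :=
      (integrable_pow hA hL (hr0 n)).sub (integrable_const _)
    rw [integral_div, integral_add hI (hP.mul_const _),
      integral_sub (integrable_pow hA hL (hr0 n)) (integrable_const _),
      integral_const, probReal_univ, one_smul, integral_mul_const, hP1, h1, one_mul]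
  simp_rw [e]
  have e2 : ((∫⁻ a, ENNReal.ofReal (a ^ 2) ∂FA) + (∫⁻ a, ENNReal.ofReal a ∂FA)) *
        (∫⁻ l, ENNReal.ofReal (l ^ 2) ∂FL) * ENNReal.ofReal (c ^ 2 / 2) =
      ∫⁻ l, ∫⁻ a, ENNReal.ofReal ((a ^ 2 + a) * l ^ 2 * (c ^ 2 / 2)) ∂FA ∂FL := by
    have : ∀ l, ∫⁻ a, ENNReal.ofReal ((a ^ 2 + a) * l ^ 2 * (c ^ 2 / 2)) ∂FA =
        ENNReal.ofReal (l ^ 2) * (((∫⁻ a, ENNReal.ofReal (a ^ 2) ∂FA) +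
          (∫⁻ a, ENNReal.ofReal a ∂FA)) * ENNReal.ofReal (c ^ 2 / 2)) := by
      intro l
      rw [← lintegral_add_left (by fun_prop), ← lintegral_mul_const _ (by fun_prop),
        ← lintegral_const_mul _ (by fun_prop)]
      refine lintegral_congr_ae ?_
      filter_upwards [ae_nonneg_of_Iio hA] with a ha
      rw [← ENNReal.ofReal_add (sq_nonneg a) ha, ← ENNReal.ofReal_mul (by positivity),
        ← ENNReal.ofReal_mul (by positivity)]
      ring_nf
    simp_rw [this]
    rw [lintegral_mul_const _ (by fun_prop)]
    ring
  rw [e2]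
  refine tendsto_double hL hA (H := fun l a => (a ^ 2 + a) * l ^ 2 * (c ^ 2 / 2)) hm
    (fun n l a hl ha => ?_) fun l a hl ha => ?_
  · have h1 := rpow_neg_upper (mul_nonneg hl (hr0 n)) ha
    have h3 : r n ^ 2 ≤ (c * sq0 n) ^ 2 := pow_le_pow_left₀ (hr0 n) (hrc n) 2
    rw [div_le_iff₀ (pow_pos (sq0_pos n) 2)]
    have := mul_le_mul_of_nonneg_left h3 (show 0 ≤ a * (a + 1) / 2 * l ^ 2 by positivity)
    linarith
  · have hw : Tendsto (fun n => l * r n) atTop (𝓝 0) := by simpa using hrt.const_mul l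
    have hq := tendsto_logQ.comp hw
    have h1 : Tendsto (fun n => 1 - l * r n * logQ (l * r n)) atTop (𝓝 (1 - 0 * (1 / 2))) :=
      (hw.mul hq).const_sub 1
    have h2 : Tendsto (fun n => a * (l * r n * (1 - l * r n * logQ (l * r n)))) atTop (𝓝 0) := by
      simpa using (hw.mul h1).const_mul a
    have h3 := ((h1.const_mul a).pow 2).mul (tendsto_expQ.comp h2)
    have h4 := ((hr.const_mul l).pow 2).mul (h3.add (hq.const_mul a))
    have e3 : (l * c) ^ 2 * ((a * (1 - 0 * (1 / 2))) ^ 2 * (1 / 2) + a * (1 / 2)) =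
      (a ^ 2 + a) * l ^ 2 * (c ^ 2 / 2) := by ring
    rw [e3] at h4
    refine h4.congr fun n => ?_
    rw [rpow_neg_expand (mul_nonneg hl (hr0 n))]
    simp only [Function.comp]
    ring

lemma phi_lipschitz (hA : FA (Set.Iio 0) = 0) (hL : FL (Set.Iio 0) = 0)
    (hAi : Integrable (fun a => a) FA) (hLi : Integrable (fun l => l) FL)
    (h1 : (∫ a, a ∂FA) * (∫ l, l ∂FL) = 1) {u v : ℝ} (hu : 0 ≤ u) (hv : 0 ≤ v) :
    |phi FA FL u - phi FA FL v| ≤ |u - v| := by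
  wlog huv : u ≤ v generalizing u v
  · rw [abs_sub_comm, abs_sub_comm u]
    exact this hv hu (by linarith)
  obtain ⟨hP, hP1⟩ := first_moment hAi hLi
  rw [phi_prod hA hL hu, phi_prod hA hL hv,
    ← integral_sub (integrable_pow hA hL hu) (integrable_pow hA hL hv), ← Real.norm_eq_abs,
    abs_sub_comm, abs_of_nonneg (sub_nonneg.2 huv)]
  refine (norm_integral_le_of_norm_le (hP.mul_const (v - u)) ?_).trans ?_
  · filter_upwards [ae_quad hA hL] with p hp
    refine (rpow_neg_diff (mul_nonneg hp.1 hu) (mul_le_mul_of_nonneg_left huv hp.1) hp.2).trans ?_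
    linarith
  · rw [integral_mul_const, hP1, h1, one_mul]

lemma phi_lower (hA : FA (Set.Iio 0) = 0) (hL : FL (Set.Iio 0) = 0)
    (hAi : Integrable (fun a => a) FA) (hLi : Integrable (fun l => l) FL)
    (h1 : (∫ a, a ∂FA) * (∫ l, l ∂FL) = 1) {u : ℝ} (hu : 0 ≤ u) :
    1 - u ≤ phi FA FL u := by
  have := (abs_le.1 (phi_lipschitz hA hL hAi hLi h1 hu le_rfl)).1
  rw [phi_zero, sub_zero, abs_of_nonneg hu] at this
  linarith

lemma phi_upper (hA : FA (Set.Iio 0) = 0) (hL : FL (Set.Iio 0) = 0)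
    (hAi : Integrable (fun a => a) FA) (hLi : Integrable (fun l => l) FL)
    (hA2 : Integrable (fun a => a ^ 2) FA) (hL2 : Integrable (fun l => l ^ 2) FL)
    (h1 : (∫ a, a ∂FA) * (∫ l, l ∂FL) = 1) {u : ℝ} (hu : 0 ≤ u) :
    phi FA FL u ≤ 1 - u + ((∫ a, a ^ 2 ∂FA) + ∫ a, a ∂FA) * (∫ l, l ^ 2 ∂FL) / 2 * u ^ 2 := by
  obtain ⟨hP, hP1⟩ := first_moment hAi hLi
  have hQ : Integrable (fun p : ℝ × ℝ => p.1 ^ 2 * (p.2 ^ 2 + p.2)) (FL.prod FA) :=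
    hL2.mul_prod (hA2.add hAi)
  have hQ1 : ∫ p : ℝ × ℝ, p.1 ^ 2 * (p.2 ^ 2 + p.2) ∂(FL.prod FA) =
      (∫ l, l ^ 2 ∂FL) * ((∫ a, a ^ 2 ∂FA) + ∫ a, a ∂FA) := by
    rw [← integral_add hA2 hAi]
    exact integral_prod_mul (fun l => l ^ 2) (fun a => a ^ 2 + a)
  have hI : Integrable (fun p : ℝ × ℝ => 1 - p.1 * p.2 * u) (FL.prod FA) :=
    (integrable_const 1).sub (hP.mul_const u)
  have e : 1 - u + ((∫ a, a ^ 2 ∂FA) + ∫ a, a ∂FA) * (∫ l, l ^ 2 ∂FL) / 2 * u ^ 2 =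
      ∫ p : ℝ × ℝ, (1 - p.1 * p.2 * u) + p.1 ^ 2 * (p.2 ^ 2 + p.2) * (u ^ 2 / 2)
        ∂(FL.prod FA) := by
    rw [integral_add hI (hQ.mul_const _), integral_sub (integrable_const _) (hP.mul_const _),
      integral_const, probReal_univ, one_smul, integral_mul_const, integral_mul_const, hP1, h1, hQ1]
    ring
  rw [e, phi_prod hA hL hu]
  refine integral_mono_ae (integrable_pow hA hL hu) (hI.add (hQ.mul_const _)) ?_
  filter_upwards [ae_quad hA hL] with p hp
  refine (rpow_neg_upper (mul_nonneg hp.1 hu) hp.2).trans_eq ?_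
  ring

end Phi


/-! ### Moment identities for solutions -/

lemma integrable_of_lintegral_lt {F : Measure ℝ} {f : ℝ → ℝ} (hf : Measurable f)
    (h0 : ∀ᵐ x ∂F, 0 ≤ f x) (h : ∫⁻ x, ENNReal.ofReal (f x) ∂F < ⊤) : Integrable f F :=
  (lintegral_ofReal_ne_top_iff_integrable hf.aestronglyMeasurable h0).1 h.ne

lemma lintegral_eq_ofReal {F : Measure ℝ} {f : ℝ → ℝ} (hf : Integrable f F)
    (h0 : ∀ᵐ x ∂F, 0 ≤ f x) : ∫⁻ x, ENNReal.ofReal (f x) ∂F = ENNReal.ofReal (∫ x, f x ∂F) :=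
  (ofReal_integral_eq_lintegral_ofReal hf h0).symm

/-- The unit mass at `1` in place of `F_T` gives `σ(s) = 1 - F̂(s)`. -/
lemma sigmaT_dirac (F : Measure ℝ) (m s : ℝ) :
    sigmaT F (Measure.dirac 1) m s = 1 - LS F s := by
  simp [sigmaT]

lemma integrable_id_of_mean {F : Measure ℝ} {μ : ℝ} (hμ : 0 < μ) (h : ∫ x, x ∂F = μ) :
    Integrable (fun x => x) F :=
  Integrable.of_integral_ne_zero (by rw [h]; exact hμ.ne')

lemma ennreal_of_mul_eq_one {x y : ℝ≥0∞} (h : x * y = 1) :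
    x ≠ 0 ∧ x ≠ ⊤ ∧ y ≠ 0 ∧ y ≠ ⊤ := by
  have hx : x ≠ 0 := by rintro rfl; simp at h
  have hy : y ≠ 0 := by rintro rfl; simp at h
  refine ⟨hx, ?_, hy, ?_⟩
  · rintro rfl; rw [ENNReal.top_mul hy] at h; simp at h
  · rintro rfl; rw [ENNReal.mul_top hx] at h; simp at h

lemma real_first_moments {FA FL : Measure ℝ} (hA : FA (Set.Iio 0) = 0) (hL : FL (Set.Iio 0) = 0)
    (h : (∫⁻ a, ENNReal.ofReal a ∂FA) * (∫⁻ l, ENNReal.ofReal l ∂FL) = 1) :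
    Integrable (fun a => a) FA ∧ Integrable (fun l => l) FL ∧
      (∫ a, a ∂FA) * (∫ l, l ∂FL) = 1 := by
  obtain ⟨-, hA1, -, hL1⟩ := ennreal_of_mul_eq_one h
  have hAi := integrable_of_lintegral_lt measurable_id' (ae_nonneg_of_Iio hA) hA1.lt_top
  have hLi := integrable_of_lintegral_lt measurable_id' (ae_nonneg_of_Iio hL) hL1.lt_top
  refine ⟨hAi, hLi, ?_⟩
  have h2 := h
  rw [lintegral_eq_ofReal hAi (ae_nonneg_of_Iio hA), lintegral_eq_ofReal hLi (ae_nonneg_of_Iio hL),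
    ← ENNReal.ofReal_mul (integral_nonneg_of_ae (ae_nonneg_of_Iio hA)), ENNReal.ofReal_eq_one] at h2
  exact h2

section Necessity

variable {μ : ℝ} {F FT FA FL FB : Measure ℝ}
  [IsProbabilityMeasure FT] [IsProbabilityMeasure FA] [IsProbabilityMeasure FL]
  [IsProbabilityMeasure FB]

omit [IsProbabilityMeasure FA] [IsProbabilityMeasure FL] in
/-- Along `s = sq0 n`, both `σ(s)` and `u(s) = σ_B(σ(s))` are asymptotic to `μ s`. -/
lemma sol_asymptotics (hμ : 0 < μ) (hT : FT (Set.Iio 0) = 0) (hB : FB (Set.Iio 0) = 0)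
    (hP : IsProbabilityMeasure F) (hF : F (Set.Iio 0) = 0) (hm : ∫ x, x ∂F = μ) :
    (∀ n, 0 ≤ sigmaT F FT μ (sq0 n)) ∧ (∀ n, sigmaT F FT μ (sq0 n) ≤ μ * sq0 n) ∧
    Tendsto (fun n => sigmaT F FT μ (sq0 n) / sq0 n) atTop (𝓝 μ) ∧
    (∀ n, 0 ≤ sigmaB FB (sigmaT F FT μ (sq0 n))) ∧
    (∀ n, sigmaB FB (sigmaT F FT μ (sq0 n)) ≤ sigmaT F FT μ (sq0 n)) ∧
    Tendsto (fun n => sigmaB FB (sigmaT F FT μ (sq0 n)) / sq0 n) atTop (𝓝 μ) := by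
  obtain ⟨hd0, hd1, hd2⟩ := dirac_facts
  have hi := integrable_id_of_mean hμ hm
  have h0 := fun n => sigma_nonneg hT hF hμ.le (sq0_pos n).le
  have h1 := fun n => sigma_le hT hF hi hm (sq0_pos n).le
  have h2 := tendsto_sigma hT hF hi hm hμ.le (r := sq0) (c := 1) (fun n => (sq0_pos n).le)
    (fun n => by rw [one_mul]) (by simp [div_self (sq0_pos _).ne'])
  rw [mul_one] at h2
  have h3 := tendsto_sigma hB hd0 hd1 hd2 zero_le_one h0 h1 h2
  rw [one_mul] at h3
  refine ⟨h0, h1, h2, fun n => ?_, fun n => ?_, ?_⟩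
  · rw [sigmaB_eq hB (h0 n)]
    exact sigma_nonneg hB hd0 zero_le_one (h0 n)
  · rw [sigmaB_eq hB (h0 n)]
    exact (sigma_le hB hd0 hd1 hd2 (h0 n)).trans_eq (one_mul _)
  · exact h3.congr fun n => by rw [sigmaB_eq hB (h0 n)]

/-- Comparing the expansions of `1 - F̂` and `1 - φ(u)` to first order, with `u(s) ~ μ s` near `0`,
forces `E[A] E[Λ] = 1`. -/
lemma Sol.first_order (hμ : 0 < μ) (hT : FT (Set.Iio 0) = 0) (hA : FA (Set.Iio 0) = 0)
    (hL : FL (Set.Iio 0) = 0) (hB : FB (Set.Iio 0) = 0) (hS : Sol FT FA FL FB μ F) :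
    (∫⁻ a, ENNReal.ofReal a ∂FA) * (∫⁻ l, ENNReal.ofReal l ∂FL) = 1 := by
  obtain ⟨hP, hF, hm, -, heq⟩ := hS
  obtain ⟨hd0, hd1, hd2⟩ := dirac_facts
  have hi := integrable_id_of_mean hμ hm
  obtain ⟨h0, h1, h2, k0, k1, k2⟩ := sol_asymptotics (FT := FT) (FB := FB) hμ hT hB hP hF hm
  have t1 := tendsto_phi_one hA hL k0 (fun n => (k1 n).trans (h1 n)) k2
  have t2 := ENNReal.tendsto_ofReal (tendsto_sigma hd0 hF hi hm hμ.le (r := sq0) (c := 1)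
    (fun n => (sq0_pos n).le) (fun n => by rw [one_mul]) (by simp [div_self (sq0_pos _).ne']))
  have t3 := tendsto_nhds_unique t1 (t2.congr fun n => by
    rw [sigmaT_dirac, heq _ (sq0_pos n).le]
    rfl)
  rw [mul_one] at t3
  have hμ1 : ENNReal.ofReal μ ≠ 0 := by simpa using hμ
  exact (ENNReal.mul_left_inj hμ1 ENNReal.ofReal_ne_top).1 (t3.trans (one_mul _).symm)

/-- The second-order identity, valid in `[0,∞]` without assuming that the moments are finite. It
comes from `F̂ - 1 + μ s = (φ(u) - 1 + u) + (σ - σ_B(σ)) + (μ s - σ)`. -/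
lemma Sol.second_order (hμ : 0 < μ) (hT : FT (Set.Iio 0) = 0) (hA : FA (Set.Iio 0) = 0)
    (hL : FL (Set.Iio 0) = 0) (hB : FB (Set.Iio 0) = 0) (hS : Sol FT FA FL FB μ F) :
    ∫⁻ x, ENNReal.ofReal (x ^ 2) ∂F =
      (((∫⁻ a, ENNReal.ofReal (a ^ 2) ∂FA) + (∫⁻ a, ENNReal.ofReal a ∂FA)) *
        (∫⁻ l, ENNReal.ofReal (l ^ 2) ∂FL) + ∫⁻ b, ENNReal.ofReal b ∂FB) * ENNReal.ofReal (μ ^ 2) +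
      (∫⁻ t, ENNReal.ofReal t ∂FT) * ∫⁻ x, ENNReal.ofReal (x ^ 2) ∂F := by
  obtain ⟨hAi, hLi, hAL⟩ := real_first_moments hA hL (hS.first_order hμ hT hA hL hB)
  obtain ⟨hP, hF, hm, -, heq⟩ := hS
  obtain ⟨hd0, hd1, hd2⟩ := dirac_facts
  have hi := integrable_id_of_mean hμ hm
  obtain ⟨h0, h1, h2, k0, k1, k2⟩ := sol_asymptotics (FT := FT) (FB := FB) hμ hT hB hP hF hm
  have q1 : ∀ n, sq0 n ≤ 1 * sq0 n := fun n => by rw [one_mul]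
  have q2 : Tendsto (fun n => sq0 n / sq0 n) atTop (𝓝 1) := by simp [div_self (sq0_pos _).ne']
  have t1 := tendsto_phi_two hA hL hAi hLi hAL k0 (fun n => (k1 n).trans (h1 n)) k2
  have t2 := tendsto_sigma_gap hB hd0 hd1 hd2 h0 h1 h2
  have t3 := tendsto_sigma_gap hT hF hi hm (fun n => (sq0_pos n).le) q1 q2
  have t4 := tendsto_sigma_gap hd0 hF hi hm (fun n => (sq0_pos n).le) q1 q2
  have t5 := tendsto_nhds_unique t4 (((t1.add t2).add t3).congr fun n => by
    have hs := sq0_pos n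
    rw [← sigmaB_eq hB (h0 n), sigmaT_dirac, ← ENNReal.ofReal_add, ← ENNReal.ofReal_add]
    · congr 1
      have : LS F (sq0 n) = phi FA FL (sigmaB FB (sigmaT F FT μ (sq0 n))) := heq _ hs.le
      rw [this]
      ring
    · have p1 := phi_lower hA hL hAi hLi hAL (k0 n)
      have p2 := k1 n
      exact add_nonneg (div_nonneg (by linarith) (by positivity))
        (div_nonneg (by linarith) (by positivity))
    · have p2 := h1 n
      exact div_nonneg (by linarith) (by positivity)
    · have p1 := phi_lower hA hL hAi hLi hAL (k0 n)
      exact div_nonneg (by linarith) (by positivity)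
    · have p2 := k1 n
      exact div_nonneg (by linarith) (by positivity))
  have e1 : ∫⁻ t, ENNReal.ofReal t ∂(Measure.dirac (1 : ℝ)) = 1 := by simp
  have e2 : ∫⁻ t, ENNReal.ofReal (t ^ 2) ∂(Measure.dirac (1 : ℝ)) = 1 := by simp
  have e3 : ENNReal.ofReal (μ ^ 2 / 2) = ENNReal.ofReal (μ ^ 2) * ENNReal.ofReal (1 ^ 2 / 2) := by
    rw [← ENNReal.ofReal_mul (by positivity)]
    congr 1
    ring
  rw [e1, e2, e3, one_mul, mul_one] at t5
  refine (ENNReal.mul_left_inj (c := ENNReal.ofReal (1 ^ 2 / 2)) (by simp)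
    ENNReal.ofReal_ne_top).1 (t5.trans ?_)
  ring

lemma lintegral_sq_ne_zero {F : Measure ℝ} (h : ∫⁻ x, ENNReal.ofReal x ∂F ≠ 0) :
    ∫⁻ x, ENNReal.ofReal (x ^ 2) ∂F ≠ 0 := by
  intro h0
  rw [lintegral_eq_zero_iff (by fun_prop)] at h0
  refine h ((lintegral_eq_zero_iff (by fun_prop)).2 ?_)
  filter_upwards [h0] with x hx
  simp only [Pi.zero_apply, ENNReal.ofReal_eq_zero] at hx ⊢
  nlinarith [sq_nonneg x]

/-- In the second-order identity `m₂ = X + E[T] m₂` the left side is finite and `X > 0`, so `X < ∞`,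
which bounds all the moments entering `X`, and `E[T] < 1`. -/
lemma Sol.cond (hμ : 0 < μ) (hT : FT (Set.Iio 0) = 0) (hA : FA (Set.Iio 0) = 0)
    (hL : FL (Set.Iio 0) = 0) (hB : FB (Set.Iio 0) = 0) (hS : Sol FT FA FL FB μ F) :
    Cond FT FA FL FB := by
  have f1 := hS.first_order hμ hT hA hL hB
  have f2 := hS.second_order hμ hT hA hL hB
  obtain ⟨hP, hF, hm, hF2, -⟩ := hS
  obtain ⟨hA0, -, hL0, -⟩ := ennreal_of_mul_eq_one f1
  have hi := integrable_id_of_mean hμ hm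
  have S1 : ∫⁻ x, ENNReal.ofReal (x ^ 2) ∂F ≠ ⊤ := by
    rw [lintegral_eq_ofReal hF2 (Eventually.of_forall fun x => sq_nonneg x)]
    exact ENNReal.ofReal_ne_top
  have S0 : ∫⁻ x, ENNReal.ofReal (x ^ 2) ∂F ≠ 0 := by
    refine lintegral_sq_ne_zero ?_
    rw [lintegral_eq_ofReal hi (ae_nonneg_of_Iio hF), hm]
    simpa using hμ
  have hL2 := lintegral_sq_ne_zero hL0
  have hM0 : ENNReal.ofReal (μ ^ 2) ≠ 0 := by simpa using hμ.ne'
  generalize ∫⁻ x, ENNReal.ofReal (x ^ 2) ∂F = S at *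
  unfold Cond
  generalize ∫⁻ a, ENNReal.ofReal (a ^ 2) ∂FA = A2 at *
  generalize ∫⁻ a, ENNReal.ofReal a ∂FA = A1 at *
  generalize ∫⁻ l, ENNReal.ofReal (l ^ 2) ∂FL = L2 at *
  generalize ∫⁻ l, ENNReal.ofReal l ∂FL = L1 at *
  generalize ∫⁻ b, ENNReal.ofReal b ∂FB = B at *
  generalize ∫⁻ t, ENNReal.ofReal t ∂FT = T at *
  generalize ENNReal.ofReal (μ ^ 2) = M at *
  have hA21 : A2 + A1 ≠ 0 := by simp [hA0]
  have hX0 : ((A2 + A1) * L2 + B) * M ≠ 0 := by simp [hM0, hL2, hA0]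
  have hX1 : ((A2 + A1) * L2 + B) * M ≠ ⊤ := by
    intro h
    rw [h, top_add] at f2
    exact S1 f2
  have hY : (A2 + A1) * L2 + B ≠ ⊤ := fun h => hX1 (by rw [h, ENNReal.top_mul hM0])
  have hZ : (A2 + A1) * L2 ≠ ⊤ := fun h => hY (by rw [h, top_add])
  have hA21t : A2 + A1 ≠ ⊤ := fun h => hZ (by rw [h, ENNReal.top_mul hL2])
  refine ⟨?_, f1, lt_top_iff_ne_top.2 fun h => hA21t (by rw [h, top_add]),
    lt_top_iff_ne_top.2 fun h => hZ (by rw [h, ENNReal.mul_top hA21]),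
    lt_top_iff_ne_top.2 fun h => hY (by rw [h, add_top])⟩
  by_contra hT1
  push Not at hT1
  have : ((A2 + A1) * L2 + B) * M + S ≤ 0 + S := by
    calc ((A2 + A1) * L2 + B) * M + S ≤ ((A2 + A1) * L2 + B) * M + T * S := by
          gcongr
          exact le_mul_of_one_le_left zero_le hT1
      _ = 0 + S := by rw [zero_add, ← f2]
  exact hX0 (le_antisymm ((ENNReal.add_le_add_iff_right S1).1 this) zero_le)

omit [IsProbabilityMeasure FT] [IsProbabilityMeasure FA] [IsProbabilityMeasure FL]
  [IsProbabilityMeasure FB] in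
/-- The moment conditions in terms of integrable functions and real-valued integrals. -/
lemma Cond.real (hT : FT (Set.Iio 0) = 0) (hA : FA (Set.Iio 0) = 0)
    (hL : FL (Set.Iio 0) = 0) (hB : FB (Set.Iio 0) = 0) (hC : Cond FT FA FL FB) :
    Integrable (fun t => t) FT ∧ ∫ t, t ∂FT < 1 ∧ Integrable (fun a => a) FA ∧
    Integrable (fun l => l) FL ∧ (∫ a, a ∂FA) * (∫ l, l ∂FL) = 1 ∧
    Integrable (fun a => a ^ 2) FA ∧ Integrable (fun l => l ^ 2) FL ∧
    Integrable (fun b => b) FB := by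
  obtain ⟨c1, c2, c3, c4, c5⟩ := hC
  obtain ⟨hAi, hLi, hAL⟩ := real_first_moments hA hL c2
  have hTi := integrable_of_lintegral_lt measurable_id' (ae_nonneg_of_Iio hT)
    (c1.trans ENNReal.one_lt_top)
  refine ⟨hTi, ?_, hAi, hLi, hAL,
    integrable_of_lintegral_lt (by fun_prop) (Eventually.of_forall fun x => sq_nonneg x) c3,
    integrable_of_lintegral_lt (by fun_prop) (Eventually.of_forall fun x => sq_nonneg x) c4,
    integrable_of_lintegral_lt measurable_id' (ae_nonneg_of_Iio hB) c5⟩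
  have := c1
  rw [lintegral_eq_ofReal hTi (ae_nonneg_of_Iio hT), ENNReal.ofReal_lt_one] at this
  exact this

lemma Sol.variance (hμ : 0 < μ) (hT : FT (Set.Iio 0) = 0) (hA : FA (Set.Iio 0) = 0)
    (hL : FL (Set.Iio 0) = 0) (hB : FB (Set.Iio 0) = 0) (hC : Cond FT FA FL FB)
    (hS : Sol FT FA FL FB μ F) :
    (∫ x, x ^ 2 ∂F) - (∫ x, x ∂F) ^ 2 =
        (((∫ a, a ^ 2 ∂FA) * (∫ l, l ^ 2 ∂FL) - ((∫ a, a ∂FA) * (∫ l, l ∂FL)) ^ 2) +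
            (∫ a, a ∂FA) * (∫ l, l ^ 2 ∂FL) + (∫ b, b ∂FB) + (∫ t, t ∂FT)) /
          (1 - (∫ t, t ∂FT)) * μ ^ 2 := by
  have f2 := hS.second_order hμ hT hA hL hB
  obtain ⟨hTi, hT1, hAi, hLi, hAL, hA2, hL2, hBi⟩ := hC.real hT hA hL hB
  obtain ⟨hP, hF, hm, hF2, -⟩ := hS
  have sq : ∀ G : Measure ℝ, ∀ᵐ x ∂G, 0 ≤ x ^ 2 := fun G => Eventually.of_forall sq_nonneg
  have g1 := integral_nonneg_of_ae (ae_nonneg_of_Iio hA)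
  have g2 := integral_nonneg_of_ae (ae_nonneg_of_Iio hB)
  have g3 := integral_nonneg_of_ae (ae_nonneg_of_Iio hT)
  have g4 := integral_nonneg_of_ae (sq FA)
  have g5 := integral_nonneg_of_ae (sq FL)
  have g6 := integral_nonneg_of_ae (sq F)
  rw [lintegral_eq_ofReal hF2 (sq F), lintegral_eq_ofReal hA2 (sq FA),
    lintegral_eq_ofReal hAi (ae_nonneg_of_Iio hA), lintegral_eq_ofReal hL2 (sq FL),
    lintegral_eq_ofReal hBi (ae_nonneg_of_Iio hB), lintegral_eq_ofReal hTi (ae_nonneg_of_Iio hT),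
    ← ENNReal.ofReal_add g4 g1, ← ENNReal.ofReal_mul (by positivity),
    ← ENNReal.ofReal_add (by positivity) g2, ← ENNReal.ofReal_mul (by positivity),
    ← ENNReal.ofReal_mul g3, ← ENNReal.ofReal_add (by positivity) (by positivity),
    ENNReal.ofReal_eq_ofReal_iff g6 (by positivity)] at f2
  have h1 : 1 - (∫ t, t ∂FT) ≠ 0 := by linarith
  rw [hAL, hm, div_mul_eq_mul_div, eq_div_iff h1]
  linear_combination f2

end Necessity


/-! ### Existence and uniqueness by contraction -/

/-- The class of distributions on which the right-hand side of the functional equation acts: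
mean `μ`, with second-order control of the transform at the origin. -/
def Good (μ C : ℝ) (F : Measure ℝ) : Prop :=
  IsProbabilityMeasure F ∧ F (Set.Iio 0) = 0 ∧ (∀ s, 0 ≤ s → 1 - μ * s ≤ LS F s) ∧
    ∀ s, 0 ≤ s → LS F s ≤ 1 - μ * s + C * s ^ 2

/-- The right-hand side of the functional equation. -/
noncomputable def stepLS (FT FA FL FB : Measure ℝ) (μ : ℝ) (F : Measure ℝ) (s : ℝ) : ℝ :=
  phi FA FL (sigmaB FB (sigmaT F FT μ s))

lemma good_dirac {μ : ℝ} (hμ : 0 < μ) {C : ℝ} (hC : μ ^ 2 / 2 ≤ C) :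
    Good μ C (Measure.dirac μ) := by
  have e : ∀ s, LS (Measure.dirac μ) s = Real.exp (-(s * μ)) := fun s => by simp [LS]
  refine ⟨inferInstance, by simp [hμ.le], fun s hs => ?_, fun s hs => ?_⟩
  · rw [e]
    linarith [Real.add_one_le_exp (-(s * μ))]
  · rw [e]
    have h1 := exp_neg_le_quadratic (mul_nonneg hs hμ.le)
    have h2 := mul_le_mul_of_nonneg_right hC (sq_nonneg s)
    nlinarith

lemma Sol.good {μ : ℝ} {F FT FA FL FB : Measure ℝ} (hμ : 0 < μ) (hS : Sol FT FA FL FB μ F) :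
    Good μ ((∫ x, x ^ 2 ∂F) / 2) F := by
  obtain ⟨hP, hF, hm, h2, -⟩ := hS
  have hi := integrable_id_of_mean hμ hm
  refine ⟨hP, hF, fun s hs => LS_lower hF hi hm hs, fun s hs => ?_⟩
  have hI : Integrable (fun x : ℝ => 1 - x * s) F := (integrable_const _).sub (hi.mul_const _)
  have e : 1 - μ * s + (∫ x, x ^ 2 ∂F) / 2 * s ^ 2 =
      ∫ x, (1 - x * s) + x ^ 2 * (s ^ 2 / 2) ∂F := by
    rw [integral_add hI (h2.mul_const _),
      integral_sub (integrable_const _) (hi.mul_const _), integral_const, probReal_univ, one_smul,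
      integral_mul_const, integral_mul_const, hm]
    ring
  rw [e]
  refine integral_mono_ae (integrable_exp hF hs)
    (hI.add (h2.mul_const _)) ?_
  filter_upwards [ae_nonneg_of_Iio hF] with x hx
  refine (exp_neg_le_quadratic (mul_nonneg hs hx)).trans_eq ?_
  ring

section Sufficiency

variable {μ : ℝ} {FT FA FL FB : Measure ℝ}
  [IsProbabilityMeasure FT] [IsProbabilityMeasure FA] [IsProbabilityMeasure FL]
  [IsProbabilityMeasure FB]

omit [IsProbabilityMeasure FA] [IsProbabilityMeasure FL] in
/-- `u(s) = σ_B(σ(s))` is a Bernstein function with the expected bounds. -/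
lemma inner_bounds {F : Measure ℝ} [IsProbabilityMeasure F] (hμ : 0 < μ)
    (hT : FT (Set.Iio 0) = 0) (hB : FB (Set.Iio 0) = 0) (hBi : Integrable (fun b => b) FB)
    (hF : F (Set.Iio 0) = 0) (hi : Integrable (fun x => x) F) (hm : ∫ x, x ∂F = μ) :
    Bern (fun s => sigmaB FB (sigmaT F FT μ s)) ∧ ∀ s, 0 ≤ s →
      0 ≤ sigmaT F FT μ s ∧ sigmaT F FT μ s ≤ μ * s ∧ 0 ≤ sigmaB FB (sigmaT F FT μ s) ∧
      sigmaB FB (sigmaT F FT μ s) ≤ sigmaT F FT μ s ∧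
      sigmaT F FT μ s - (∫ b, b ∂FB) / 2 * sigmaT F FT μ s ^ 2 ≤
        sigmaB FB (sigmaT F FT μ s) := by
  obtain ⟨hd0, hd1, hd2⟩ := dirac_facts
  have h0 := fun s hs => sigma_nonneg hT hF hμ.le (s := s) hs
  refine ⟨((bern_id.sigma hT hF hi hm hμ.le).sigma hB hd0 hd1 hd2 zero_le_one).congr
    fun s hs => (sigmaB_eq hB (h0 s hs)).symm, fun s hs => ?_⟩
  rw [sigmaB_eq hB (h0 s hs)]
  refine ⟨h0 s hs, sigma_le hT hF hi hm hs, sigma_nonneg hB hd0 zero_le_one (h0 s hs),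
    (sigma_le hB hd0 hd1 hd2 (h0 s hs)).trans_eq (one_mul _), ?_⟩
  have := sigma_gap_le hB hd0 hd1 hd2 hBi (C := 1 / 2) (fun s hs => by
    rw [LS_dirac]
    linarith [exp_neg_le_quadratic hs]) (h0 s hs)
  linarith

/-- The right-hand side of the functional equation maps `Good μ C` to itself for large `C`. -/
lemma Good.step (hμ : 0 < μ) (hT : FT (Set.Iio 0) = 0) (hA : FA (Set.Iio 0) = 0)
    (hL : FL (Set.Iio 0) = 0) (hB : FB (Set.Iio 0) = 0) (hC : Cond FT FA FL FB) {C : ℝ}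
    (hC0 : 0 ≤ C)
    (hC1 : (((∫ a, a ^ 2 ∂FA) + ∫ a, a ∂FA) * (∫ l, l ^ 2 ∂FL) / 2 + (∫ b, b ∂FB) / 2) * μ ^ 2 ≤
      C * (1 - ∫ t, t ∂FT)) {F : Measure ℝ} (hG : Good μ C F) :
    ∃ F', Good μ C F' ∧ ∀ s, 0 ≤ s → LS F' s = stepLS FT FA FL FB μ F s := by
  obtain ⟨hTi, hT1, hAi, hLi, hAL, hA2, hL2, hBi⟩ := hC.real hT hA hL hB
  obtain ⟨hP, hF, hlo, hup⟩ := hG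
  obtain ⟨hi, hm, -, -⟩ := moments_of_LS hF hμ.le hC0 hlo hup
  obtain ⟨hbern, hb⟩ := inner_bounds (FT := FT) (FB := FB) hμ hT hB hBi hF hi hm
  have hlo' : ∀ s, 0 ≤ s → 1 - μ * s ≤ stepLS FT FA FL FB μ F s := by
    intro s hs
    obtain ⟨b1, b2, b3, b4, b5⟩ := hb s hs
    have := phi_lower hA hL hAi hLi hAL b3
    unfold stepLS
    linarith
  have hzero : stepLS FT FA FL FB μ F 0 = 1 := by
    obtain ⟨b1, b2, b3, b4, b5⟩ := hb 0 le_rfl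
    have : sigmaB FB (sigmaT F FT μ 0) = 0 := by linarith
    rw [stepLS, this, phi_zero]
  obtain ⟨F', hP', hF', hLS⟩ := (expPos_phi hA hL hbern).exists_LS hzero hlo'
  refine ⟨F', ⟨hP', hF', fun s hs => ?_, fun s hs => ?_⟩, hLS⟩
  · exact (hlo' s hs).trans_eq (hLS s hs).symm
  · obtain ⟨b1, b2, b3, b4, b5⟩ := hb s hs
    have p := phi_upper hA hL hAi hLi hA2 hL2 hAL b3
    have g := sigma_gap_le hT hF hi hm hTi hup hs
    have hD : 0 ≤ ((∫ a, a ^ 2 ∂FA) + ∫ a, a ∂FA) * (∫ l, l ^ 2 ∂FL) / 2 := by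
      have g1 := integral_nonneg_of_ae (ae_nonneg_of_Iio hA)
      have g2 : 0 ≤ ∫ a, a ^ 2 ∂FA := integral_nonneg fun _ => sq_nonneg _
      have g3 : 0 ≤ ∫ l, l ^ 2 ∂FL := integral_nonneg fun _ => sq_nonneg _
      positivity
    have hb0 := integral_nonneg_of_ae (ae_nonneg_of_Iio hB)
    have s1 := pow_le_pow_left₀ b1 b2 2
    have s2 := (pow_le_pow_left₀ b3 b4 2).trans s1
    have s3 := mul_le_mul_of_nonneg_left s2 hD
    have s4 := mul_le_mul_of_nonneg_left s1 (div_nonneg hb0 zero_le_two)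
    have s5 := mul_le_mul_of_nonneg_right hC1 (sq_nonneg s)
    rw [hLS s hs]
    change phi FA FL (sigmaB FB (sigmaT F FT μ s)) ≤ _
    linarith

/-- `F ↦ stepLS F` contracts the distance `sup |F̂ - Ĝ| / s²` by the factor `E[T]`. -/
lemma step_contract (hμ : 0 < μ) (hT : FT (Set.Iio 0) = 0) (hA : FA (Set.Iio 0) = 0)
    (hL : FL (Set.Iio 0) = 0) (hB : FB (Set.Iio 0) = 0) (hC : Cond FT FA FL FB) {C C' : ℝ}
    (hC0 : 0 ≤ C) (hC0' : 0 ≤ C') {F G : Measure ℝ} (hF : Good μ C F) (hG : Good μ C' G) {K : ℝ}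
    (hK : ∀ s, 0 ≤ s → |LS F s - LS G s| ≤ K * s ^ 2) {s : ℝ} (hs : 0 ≤ s) :
    |stepLS FT FA FL FB μ F s - stepLS FT FA FL FB μ G s| ≤ (∫ t, t ∂FT) * K * s ^ 2 := by
  obtain ⟨hTi, hT1, hAi, hLi, hAL, hA2, hL2, hBi⟩ := hC.real hT hA hL hB
  obtain ⟨hP, hF, hlo, hup⟩ := hF
  obtain ⟨hi, hm, -, -⟩ := moments_of_LS hF hμ.le hC0 hlo hup
  obtain ⟨b1, -, b3, -, -⟩ := (inner_bounds (FT := FT) (FB := FB) hμ hT hB hBi hF hi hm).2 s hs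
  obtain ⟨hP', hG, hlo', hup'⟩ := hG
  obtain ⟨hi', hm', -, -⟩ := moments_of_LS hG hμ.le hC0' hlo' hup'
  obtain ⟨d1, -, d3, -, -⟩ := (inner_bounds (FT := FT) (FB := FB) hμ hT hB hBi hG hi' hm').2 s hs
  exact (phi_lipschitz hA hL hAi hLi hAL b3 d3).trans <| (sigmaB_lipschitz hB b1 d1).trans <|
    sigma_contract hT hF hG hi hm hi' hm' hTi hK hs

omit [IsProbabilityMeasure FT] [IsProbabilityMeasure FA] [IsProbabilityMeasure FL]
  [IsProbabilityMeasure FB] in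
lemma Sol.eq_step {F : Measure ℝ} (hS : Sol FT FA FL FB μ F) {s : ℝ} (hs : 0 ≤ s) :
    LS F s = stepLS FT FA FL FB μ F s := hS.2.2.2.2 s hs

lemma Sol.unique (hμ : 0 < μ) (hT : FT (Set.Iio 0) = 0) (hA : FA (Set.Iio 0) = 0)
    (hL : FL (Set.Iio 0) = 0) (hB : FB (Set.Iio 0) = 0) (hC : Cond FT FA FL FB)
    {F G : Measure ℝ} (hF : Sol FT FA FL FB μ F) (hG : Sol FT FA FL FB μ G) : F = G := by
  obtain ⟨hTi, hT1, -⟩ := hC.real hT hA hL hB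
  have hT0 := integral_nonneg_of_ae (ae_nonneg_of_Iio hT)
  have gF := hF.good hμ
  have gG := hG.good hμ
  have cF : 0 ≤ (∫ x, x ^ 2 ∂F) / 2 :=
    div_nonneg (integral_nonneg fun _ => sq_nonneg _) zero_le_two
  have cG : 0 ≤ (∫ x, x ^ 2 ∂G) / 2 :=
    div_nonneg (integral_nonneg fun _ => sq_nonneg _) zero_le_two
  set K := (∫ x, x ^ 2 ∂F) / 2 + (∫ x, x ^ 2 ∂G) / 2 with hKdef
  have key : ∀ n : ℕ, ∀ s, 0 ≤ s → |LS F s - LS G s| ≤ (∫ t, t ∂FT) ^ n * K * s ^ 2 := by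
    intro n
    induction n with
    | zero =>
      intro s hs
      have f1 := gF.2.2.1 s hs
      have f2 := gF.2.2.2 s hs
      have g1 := gG.2.2.1 s hs
      have g2 := gG.2.2.2 s hs
      have c1 := mul_nonneg cF (sq_nonneg s)
      have c2 := mul_nonneg cG (sq_nonneg s)
      rw [pow_zero, one_mul, hKdef, add_mul, abs_le]
      constructor <;> linarith
    | succ n ih =>
      intro s hs
      rw [hF.eq_step hs, hG.eq_step hs]
      refine (step_contract hμ hT hA hL hB hC cF cG gF gG ih hs).trans_eq ?_
      ring
  have hPF := hF.1
  have hPG := hG.1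
  refine LS_injective hF.2.1 hG.2.1 fun s hs => ?_
  have lim : Tendsto (fun n : ℕ => (∫ t, t ∂FT) ^ n * K * s ^ 2) atTop (𝓝 0) := by
    simpa using ((tendsto_pow_atTop_nhds_zero_of_lt_one hT0 hT1).mul_const K).mul_const (s ^ 2)
  have := ge_of_tendsto' lim fun n => key n s hs
  exact sub_eq_zero.1 (abs_eq_zero.1 (le_antisymm this (abs_nonneg _)))

/-- The Picard iterates converge geometrically in `sup |F̂ - Ĝ| / s²`; the limit is again the
transform of a distribution in `Good μ C`, and it is a fixed point by the contraction estimate. -/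
lemma exists_sol (hμ : 0 < μ) (hT : FT (Set.Iio 0) = 0) (hA : FA (Set.Iio 0) = 0)
    (hL : FL (Set.Iio 0) = 0) (hB : FB (Set.Iio 0) = 0) (hC : Cond FT FA FL FB) :
    ∃ F, Sol FT FA FL FB μ F := by
  obtain ⟨hTi, hT1, -⟩ := hC.real hT hA hL hB
  have hT0 := integral_nonneg_of_ae (ae_nonneg_of_Iio hT)
  set q := ∫ t, t ∂FT with hq
  have hq1 : 0 < 1 - q := by linarith
  set D := (((∫ a, a ^ 2 ∂FA) + ∫ a, a ∂FA) * (∫ l, l ^ 2 ∂FL) / 2 + (∫ b, b ∂FB) / 2) * μ ^ 2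
    with hD
  set C := max (D / (1 - q)) (μ ^ 2 / 2) with hCdef
  have hC1 : D ≤ C * (1 - q) := (div_le_iff₀ hq1).1 (le_max_left _ _)
  have hC2 : μ ^ 2 / 2 ≤ C := le_max_right _ _
  have hC0 : 0 ≤ C := le_trans (by positivity) hC2
  have hstep : ∀ F : {F // Good μ C F}, ∃ F' : {F // Good μ C F}, ∀ s, 0 ≤ s →
      LS F'.1 s = stepLS FT FA FL FB μ F.1 s := by
    rintro ⟨F, hF⟩
    obtain ⟨F', h1, h2⟩ := hF.step hμ hT hA hL hB hC hC0 hC1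
    exact ⟨⟨F', h1⟩, h2⟩
  choose Φ hΦ using hstep
  -- Picard iteration from the unit mass at `μ`
  let S : ℕ → {F // Good μ C F} := fun n => Φ^[n] ⟨Measure.dirac μ, good_dirac hμ hC2⟩
  have hS : ∀ n s, 0 ≤ s → LS (S (n + 1)).1 s = stepLS FT FA FL FB μ (S n).1 s := by
    intro n s hs
    change LS (Φ^[n + 1] _).1 s = _
    rw [Function.iterate_succ_apply']
    exact hΦ _ s hs
  have hgeo : ∀ n s, 0 ≤ s → |LS (S n).1 s - LS (S (n + 1)).1 s| ≤ q ^ n * C * s ^ 2 := by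
    intro n
    induction n with
    | zero =>
      intro s hs
      have f1 := (S 0).2.2.2.1 s hs
      have f2 := (S 0).2.2.2.2 s hs
      have g1 := (S (0 + 1)).2.2.2.1 s hs
      have g2 := (S (0 + 1)).2.2.2.2 s hs
      rw [pow_zero, one_mul, abs_le]
      constructor <;> linarith
    | succ n ih =>
      intro s hs
      rw [hS n s hs, hS (n + 1) s hs]
      refine (step_contract hμ hT hA hL hB hC hC0 hC0 (S n).2 (S (n + 1)).2 ih hs).trans_eq ?_
      ring
  have hgeo' : ∀ s, 0 ≤ s → ∀ n, dist (LS (S n).1 s) (LS (S (n + 1)).1 s) ≤ C * s ^ 2 * q ^ n := by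
    intro s hs n
    rw [Real.dist_eq]
    exact (hgeo n s hs).trans_eq (by ring)
  have hlim : ∀ s, ∃ y, 0 ≤ s → Tendsto (fun n => LS (S n).1 s) atTop (𝓝 y) := by
    intro s
    by_cases hs : 0 ≤ s
    · obtain ⟨y, hy⟩ := cauchySeq_tendsto_of_complete
        (cauchySeq_of_le_geometric q (C * s ^ 2) hT1 (hgeo' s hs))
      exact ⟨y, fun _ => hy⟩
    · exact ⟨0, fun h => absurd h hs⟩
  choose f hf using hlim
  have hpos : ExpPos f := by
    refine ExpPos.lim (f := fun n => LS (S n).1) (fun n => ?_) hf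
    have := (S n).2.1
    exact expPos_LS (S n).2.2.1
  have hf0 : f 0 = 1 := by
    refine tendsto_nhds_unique (hf 0 le_rfl) (tendsto_const_nhds.congr fun n => ?_)
    have := (S n).2.1
    exact LS_zero.symm
  have hlo : ∀ s, 0 ≤ s → 1 - μ * s ≤ f s := fun s hs =>
    ge_of_tendsto' (hf s hs) fun n => (S n).2.2.2.1 s hs
  obtain ⟨F, hP, hF, hLS⟩ := hpos.exists_LS hf0 hlo
  have hG : Good μ C F := by
    refine ⟨hP, hF, fun s hs => (hlo s hs).trans_eq (hLS s hs).symm, fun s hs => ?_⟩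
    rw [hLS s hs]
    exact le_of_tendsto' (hf s hs) fun n => (S n).2.2.2.2 s hs
  obtain ⟨hi, hm, h2, -⟩ := moments_of_LS hF hμ.le hC0 hG.2.2.1 hG.2.2.2
  refine ⟨F, hP, hF, hm, h2, fun s hs => ?_⟩
  have hdist : ∀ n s, 0 ≤ s → |LS (S n).1 s - LS F s| ≤ (q ^ n * C / (1 - q)) * s ^ 2 := by
    intro n s hs
    have := dist_le_of_le_geometric_of_tendsto q (C * s ^ 2) hT1 (hgeo' s hs) (hf s hs) n
    rw [Real.dist_eq, ← hLS s hs] at this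
    exact this.trans_eq (by ring)
  have hconv : Tendsto (fun n => LS (S (n + 1)).1 s) atTop (𝓝 (stepLS FT FA FL FB μ F s)) := by
    rw [tendsto_iff_dist_tendsto_zero]
    refine squeeze_zero (fun _ => dist_nonneg)
      (g := fun n : ℕ => q * (q ^ n * C / (1 - q)) * s ^ 2) (fun n => ?_) ?_
    · rw [Real.dist_eq, hS n s hs]
      exact step_contract hμ hT hA hL hB hC hC0 hC0 (S n).2 hG (hdist n) hs
    · simpa using ((((tendsto_pow_atTop_nhds_zero_of_lt_one hT0 hT1).mul_const C).div_const
        (1 - q)).const_mul q).mul_const (s ^ 2)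
  rw [hLS s hs]
  exact tendsto_nhds_unique ((hf s hs).comp (tendsto_add_atTop_nat 1)) hconv

end Sufficiency

/-- Theorem 4: the moment conditions hold iff the functional equation has exactly one
solution with mean `μ` and finite second moment; moreover, the solution has variance
`((Var[AΛ] + E[A]·E[Λ²] + E[B] + E[T])/(1 − E[T])) μ²`, where
`Var[AΛ] = E[A²]E[Λ²] − (E[A]E[Λ])²`. -/
theorem stmt7 (μ : ℝ) (hμ : 0 < μ) (FT FA FL FB : Measure ℝ)
    [IsProbabilityMeasure FT] [IsProbabilityMeasure FA] [IsProbabilityMeasure FL]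
    [IsProbabilityMeasure FB]
    (hT : FT (Set.Iio 0) = 0) (hA : FA (Set.Iio 0) = 0) (hL : FL (Set.Iio 0) = 0)
    (hB : FB (Set.Iio 0) = 0) :
    (Cond FT FA FL FB ↔ (∃! F : Measure ℝ, Sol FT FA FL FB μ F)) ∧
    (Cond FT FA FL FB → ∀ F : Measure ℝ, Sol FT FA FL FB μ F →
      (∫ x, x ^ 2 ∂F) - (∫ x, x ∂F) ^ 2 =
        (((∫ a, a ^ 2 ∂FA) * (∫ l, l ^ 2 ∂FL) - ((∫ a, a ∂FA) * (∫ l, l ∂FL)) ^ 2) +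
            (∫ a, a ∂FA) * (∫ l, l ^ 2 ∂FL) + (∫ b, b ∂FB) + (∫ t, t ∂FT)) /
          (1 - (∫ t, t ∂FT)) * μ ^ 2) := by
  refine ⟨⟨fun hC => ?_, fun ⟨F, hF, _⟩ => hF.cond hμ hT hA hL hB⟩,
    fun hC F hF => hF.variance hμ hT hA hL hB hC⟩
  obtain ⟨F, hF⟩ := exists_sol hμ hT hA hL hB hC
  exact ⟨F, hF, fun G hG => hG.unique hμ hT hA hL hB hC hF⟩
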